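/- arXiv:0901.0619 — 2 statements merged into one kernel-verified Lean document; each statement's English description precedes it below -/
import Mathlib

section
/- For every complex s with Re(s) > 1, ∑'_{(m,k)} [ 1/(2m² + mk + 2k²)^s + 1/(m² + mk + 4k²)^s ] = 2·ζ(s)·L(χ_{-15}, s), where ζ is the Riemann zeta function. -/
/-- The quadratic Dirichlet character modulo 3:
`χ₋₃(n) = 1` if `n ≡ 1 (mod 3)`, `-1` if `n ≡ 2 (mod 3)`, `0` if `3 ∣ n`. -/
def chiNeg3 (n : ℕ) : ℤ :=
  if n % 3 = 1 then 1 else if n % 3 = 2 then -1 else 0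

/-- The quadratic Dirichlet character modulo 5 given by the Legendre symbol `(n/5)`. -/
def chi5 (n : ℕ) : ℤ :=
  if n % 5 = 1 ∨ n % 5 = 4 then 1 else if n % 5 = 2 ∨ n % 5 = 3 then -1 else 0

/-- The quadratic Dirichlet character modulo 15, `χ₋₁₅(n) = (n/3)·(n/5)`. -/
def chiNeg15 (n : ℕ) : ℤ := chiNeg3 n * chi5 n

/-- The Dirichlet `L`-series `L(χ, s) = ∑_{n ≥ 1} χ(n) n^{-s}`. -/
noncomputable def LSer (χ : ℕ → ℤ) (s : ℂ) : ℂ :=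
  ∑' n : ℕ, (χ (n + 1) : ℂ) / ((n : ℂ) + 1) ^ s

namespace QF

/-- A reduced form of discriminant -15 (selected by `q`) together with an integer matrix. -/
@[ext] structure Mat where
  q : Bool
  m : ℤ
  k : ℤ
  u : ℤ
  v : ℤ

def A (q : Bool) : ℤ := if q then 2 else 1
def C (q : Bool) : ℤ := if q then 2 else 4

def Mat.fa (x : Mat) : ℤ := A x.q * x.m ^ 2 + x.m * x.k + C x.q * x.k ^ 2
def Mat.fb (x : Mat) : ℤ := A x.q * x.m * x.u + C x.q * x.k * x.v + x.u * x.k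
def Mat.fc (x : Mat) : ℤ := A x.q * x.u ^ 2 + x.u * x.v + C x.q * x.v ^ 2
def Mat.det (x : Mat) : ℤ := x.m * x.v - x.u * x.k

lemma AC (q : Bool) : A q * C q = 4 := by cases q <;> simp [A, C]

lemma Mat.disc (x : Mat) (h : x.det = 1) : x.fa * x.fc = x.fb ^ 2 + x.fb + 4 := by
  obtain ⟨q, m, k, u, v⟩ := x
  simp only [Mat.det, Mat.fa, Mat.fb, Mat.fc] at *
  have h1 : m * v = 1 + u * k := by linarith
  have h2 := AC q
  cases q <;> simp only [A, C] at * <;> simp at * <;>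
  grind

def G (a b c : ℤ) : Set Mat := {x | x.det = 1 ∧ x.fa = a ∧ x.fb = b ∧ x.fc = c}

def shift (t : ℤ) : Mat ≃ Mat where
  toFun x := ⟨x.q, x.m, x.k, x.u + t * x.m, x.v + t * x.k⟩
  invFun x := ⟨x.q, x.m, x.k, x.u - t * x.m, x.v - t * x.k⟩
  left_inv x := by ext <;> simp
  right_inv x := by ext <;> simp

def swap : Mat ≃ Mat where
  toFun x := ⟨x.q, x.u, x.v, -x.m, -x.k⟩
  invFun x := ⟨x.q, -x.u, -x.v, x.m, x.k⟩
  left_inv x := by ext <;> simp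
  right_inv x := by ext <;> simp

lemma shift_det (t : ℤ) (x : Mat) : (shift t x).det = x.det := by
  simp [shift, Mat.det]; ring
lemma shift_fa (t : ℤ) (x : Mat) : (shift t x).fa = x.fa := by
  simp [shift, Mat.fa]
lemma shift_fb (t : ℤ) (x : Mat) (h : x.det = 1) : (shift t x).fb = x.fb + t * x.fa := by
  simp [shift, Mat.fb, Mat.fa]; ring
lemma shift_fc (t : ℤ) (x : Mat) (h : x.det = 1) :
    (shift t x).fc = x.fc + t * (2 * x.fb + 1) + t ^ 2 * x.fa := by
  simp only [shift, Mat.fb, Mat.fa, Mat.fc, Mat.det, Equiv.coe_fn_mk] at *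
  linear_combination t * h

lemma swap_det (x : Mat) : (swap x).det = x.det := by
  simp [swap, Mat.det]; ring
lemma swap_fa (x : Mat) : (swap x).fa = x.fc := by
  simp [swap, Mat.fa, Mat.fc]
lemma swap_fb (x : Mat) (h : x.det = 1) : (swap x).fb = - x.fb - 1 := by
  simp only [swap, Mat.fb, Mat.fa, Mat.fc, Mat.det, Equiv.coe_fn_mk] at *
  linear_combination -h
lemma swap_fc (x : Mat) : (swap x).fc = x.fa := by
  simp [swap, Mat.fa, Mat.fc]

lemma card_G_shift (t a b c : ℤ) :
    (G (a) (b + t * a) (c + t * (2 * b + 1) + t ^ 2 * a)).ncard = (G a b c).ncard := by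
  rw [← Set.ncard_image_of_injective (G a b c) (shift t).injective]
  congr 1
  ext y
  obtain ⟨x, rfl⟩ := (shift t).surjective y
  simp only [Set.mem_image, EmbeddingLike.apply_eq_iff_eq, exists_eq_right, G, Set.mem_setOf_eq,
    shift_det, shift_fa]
  constructor
  · rintro ⟨h, h1, h2, h3⟩
    rw [shift_fb t x h] at h2
    rw [shift_fc t x h] at h3
    subst h1
    have : x.fb = b := by linarith
    subst this
    exact ⟨h, rfl, rfl, by linarith⟩
  · rintro ⟨h, h1, h2, h3⟩
    rw [shift_fb t x h, shift_fc t x h, h1, h2, h3]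
    exact ⟨h, rfl, rfl, rfl⟩

lemma card_G_swap (a b c : ℤ) : (G c (-b - 1) a).ncard = (G a b c).ncard := by
  rw [← Set.ncard_image_of_injective (G a b c) swap.injective]
  congr 1
  ext y
  obtain ⟨x, rfl⟩ := swap.surjective y
  simp only [Set.mem_image, EmbeddingLike.apply_eq_iff_eq, exists_eq_right, G, Set.mem_setOf_eq,
    swap_det, swap_fa, swap_fc]
  constructor
  · rintro ⟨h, h1, h2, h3⟩
    rw [swap_fb x h] at h2
    exact ⟨h, h3, by linarith, h1⟩
  · rintro ⟨h, h1, h2, h3⟩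
    rw [swap_fb x h]
    exact ⟨h, h3, by linarith, h1⟩

lemma bnd {x : ℤ} (n : ℤ) (hn : 0 ≤ n) (h : x ^ 2 < (n + 1) ^ 2) : -n ≤ x ∧ x ≤ n := by
  have := abs_lt_of_sq_lt_sq' h (by omega)
  omega

lemma card_G_one : (G 1 0 4).ncard = 2 := by
  have : G 1 0 4 = {⟨false, 1, 0, 0, 1⟩, ⟨false, -1, 0, 0, -1⟩} := by
    ext ⟨q, m, k, u, v⟩
    simp only [G, Set.mem_setOf_eq, Mat.det, Mat.fa, Mat.fb, Mat.fc, Set.mem_insert_iff,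
      Set.mem_singleton_iff, Mat.mk.injEq]
    constructor
    · rintro ⟨h, h1, h2, h3⟩
      cases q
      · simp [A, C] at *
        have hk := bnd (x := k) 0 le_rfl (by nlinarith [sq_nonneg (2 * m + k)])
        obtain rfl : k = 0 := by omega
        have hm := bnd (x := m) 1 (by norm_num) (by nlinarith)
        obtain ⟨hm1, hm2⟩ := hm
        interval_cases m <;> simp_all <;> omega
      · simp [A, C] at *
        have hk := bnd (x := k) 0 le_rfl (by nlinarith [sq_nonneg (4 * m + k)])
        obtain rfl : k = 0 := by omega
        exfalso
        simp at *
        omega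
    · rintro (⟨rfl, rfl, rfl, rfl, rfl⟩ | ⟨rfl, rfl, rfl, rfl, rfl⟩) <;> simp [A, C]
  rw [this, Set.ncard_pair]
  simp

lemma card_G_two : (G 2 0 2).ncard = 2 := by
  have : G 2 0 2 = {⟨true, 1, 0, 0, 1⟩, ⟨true, -1, 0, 0, -1⟩} := by
    ext ⟨q, m, k, u, v⟩
    simp only [G, Set.mem_setOf_eq, Mat.det, Mat.fa, Mat.fb, Mat.fc, Set.mem_insert_iff,
      Set.mem_singleton_iff, Mat.mk.injEq]
    constructor
    · rintro ⟨h, h1, h2, h3⟩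
      cases q
      · simp [A, C] at *
        have hk := bnd (x := k) 0 le_rfl (by nlinarith [sq_nonneg (2 * m + k)])
        obtain rfl : k = 0 := by omega
        have hm := bnd (x := m) 1 (by norm_num) (by nlinarith)
        obtain ⟨hm1, hm2⟩ := hm
        exfalso
        interval_cases m <;> simp_all
      · simp [A, C] at *
        obtain ⟨hk1, hk2⟩ := bnd (x := k) 1 (by norm_num) (by nlinarith [sq_nonneg (4 * m + k)])
        obtain ⟨hm1, hm2⟩ := bnd (x := m) 1 (by norm_num) (by nlinarith [sq_nonneg (4 * k + m)])
        obtain ⟨hu1, hu2⟩ := bnd (x := u) 1 (by norm_num) (by nlinarith [sq_nonneg (4 * v + u)])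
        obtain ⟨hv1, hv2⟩ := bnd (x := v) 1 (by norm_num) (by nlinarith [sq_nonneg (4 * u + v)])
        interval_cases k <;> interval_cases m <;> simp at h1 <;> interval_cases u <;> 
          interval_cases v <;> simp_all
    · rintro (⟨rfl, rfl, rfl, rfl, rfl⟩ | ⟨rfl, rfl, rfl, rfl, rfl⟩) <;> simp [A, C]
  rw [this, Set.ncard_pair]
  simp

lemma card_G_aux (n : ℕ) : ∀ a b c : ℤ, 0 < a → a ≤ n → a * c = b ^ 2 + b + 4 →
    (G a b c).ncard = 2 := by
  induction n with
  | zero => intro a b c h1 h2; simp at h2; omega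
  | succ n ih =>
    intro a b c ha han habc
    -- shift
    obtain ⟨t, ht1, ht2⟩ : ∃ t : ℤ, -a ≤ 2 * (b + t * a) ∧ 2 * (b + t * a) < a := by
      refine ⟨-((2 * b + a) / (2 * a)), ?_, ?_⟩
      · have := Int.mul_ediv_self_le (x := 2 * b + a) (k := 2 * a) (by omega)
        nlinarith
      · have := Int.lt_mul_ediv_self_add (x := 2 * b + a) (k := 2 * a) (by omega)
        nlinarith
    rw [← card_G_shift t]
    have h2 : a * (c + t * (2 * b + 1) + t ^ 2 * a) = (b + t * a) ^ 2 + (b + t * a) + 4 := by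
      linear_combination habc
    generalize c + t * (2 * b + 1) + t ^ 2 * a = c' at *
    generalize b + t * a = b' at *
    clear habc
    have hc' : 0 < c' := by
      by_contra! h
      nlinarith [sq_nonneg (2 * b' + 1)]
    by_cases hca : c' < a
    · rw [← card_G_swap]
      apply ih _ _ _ hc' (by push_cast at han; omega)
      linear_combination h2
    · push Not at hca
      have : a ≤ 2 := by
        by_contra! h
        nlinarith
      interval_cases a
      · obtain rfl : b' = 0 := by omega
        obtain rfl : c' = 4 := by omega
        exact card_G_one
      · have : b' = 0 ∨ b' = -1 := by omega
        obtain rfl | rfl := this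
        · obtain rfl : c' = 2 := by omega
          exact card_G_two
        · obtain rfl : c' = 2 := by omega
          rw [← card_G_swap]
          exact card_G_two

lemma card_G (a b c : ℤ) (ha : 0 < a) (h : a * c = b ^ 2 + b + 4) : (G a b c).ncard = 2 :=
  card_G_aux a.toNat a b c ha (by omega) h
end QF
namespace QF

def roots (n : ℕ) : Finset ℕ := (Finset.range n).filter (fun b => n ∣ b ^ 2 + b + 4)

lemma card_roots (n : ℕ) (hn : n ≠ 0) :
    (roots n).card = Nat.card {x : ZMod n // x ^ 2 + x + 4 = 0} := by
  haveI : NeZero n := ⟨hn⟩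
  rw [show (roots n).card = Nat.card (roots n : Set ℕ) by simp]
  symm
  refine Nat.card_eq_of_bijective
    (fun x : {x : ZMod n // x ^ 2 + x + 4 = 0} => (⟨x.1.val, ?_⟩ : (roots n : Set ℕ))) ⟨?_, ?_⟩
  · simp only [roots, Finset.coe_filter, Finset.mem_range, Set.mem_setOf_eq]
    refine ⟨ZMod.val_lt _, ?_⟩
    rw [← ZMod.natCast_eq_zero_iff]
    push_cast
    rw [ZMod.natCast_zmod_val]
    exact x.2
  · rintro ⟨x, hx⟩ ⟨y, hy⟩ h
    simp only [Subtype.mk.injEq] at h ⊢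
    exact ZMod.val_injective _ h
  · rintro ⟨b, hb⟩
    simp only [roots, Finset.coe_filter, Finset.mem_range, Set.mem_setOf_eq] at hb
    refine ⟨⟨(b : ZMod n), ?_⟩, ?_⟩
    · have := (ZMod.natCast_eq_zero_iff _ _).2 hb.2
      push_cast at this
      exact this
    · simp [ZMod.val_natCast, Nat.mod_eq_of_lt hb.1]

lemma rho_mul (m n : ℕ) (h : m.Coprime n) :
    (roots (m * n)).card = (roots m).card * (roots n).card := by
  by_cases hm : m = 0
  · subst hm; simp [roots]
  by_cases hn : n = 0
  · subst hn; simp [roots]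
  rw [card_roots _ (by positivity), card_roots m hm, card_roots n hn, ← Nat.card_prod]
  let e := ZMod.chineseRemainder h
  have he : ∀ x, x ^ 2 + x + 4 = 0 ↔ (e x).1 ^ 2 + (e x).1 + 4 = 0 ∧ (e x).2 ^ 2 + (e x).2 + 4 = 0 := by
    intro x
    rw [← map_eq_zero_iff e e.injective]
    simp only [map_add, map_pow, map_ofNat, Prod.ext_iff]
    rfl
  refine Nat.card_eq_of_bijective (fun x => (⟨(e x.1).1, ((he _).1 x.2).1⟩, ⟨(e x.1).2, ((he _).1 x.2).2⟩)) ⟨?_, ?_⟩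
  · rintro ⟨x, hx⟩ ⟨y, hy⟩ hxy
    simp only [Prod.mk.injEq, Subtype.mk.injEq] at hxy ⊢
    exact e.injective (Prod.ext hxy.1 hxy.2)
  · rintro ⟨⟨x, hx⟩, ⟨y, hy⟩⟩
    refine ⟨⟨e.symm (x, y), ?_⟩, ?_⟩
    · rw [he]; simpa using ⟨hx, hy⟩
    · simp

lemma rho_lift (p : ℕ) (hp : p.Prime) (h15 : ¬ p ∣ 15) (j : ℕ) (hj : 1 ≤ j) :
    (roots (p ^ (j + 1))).card = (roots (p ^ j)).card := by
  have hpj : p ∣ p ^ j := dvd_pow_self p (by omega)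
  have hp' : Prime (p : ℤ) := Nat.prime_iff_prime_int.mp hp
  have key : ∀ x y : ℤ, (p : ℤ) ∣ x ^ 2 + x + 4 → (p : ℤ) ∣ x - y → IsCoprime (p : ℤ) (x + y + 1) := by
    intro x y hx hxy
    rw [Prime.coprime_iff_not_dvd hp']
    intro h
    apply h15
    have : (p : ℤ) ∣ 15 := by
      obtain ⟨a, ha⟩ := hx
      obtain ⟨b, hb⟩ := hxy
      obtain ⟨c, hc⟩ := h
      have h1 : 2 * x + 1 = p * (b + c) := by linarith
      refine ⟨4 * a - (b + c) * (2 * x + 1), ?_⟩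
      linear_combination 4 * ha - (2 * x + 1) * h1
    exact_mod_cast this
  rw [card_roots _ (pow_ne_zero _ hp.ne_zero), card_roots _ (pow_ne_zero _ hp.ne_zero)]
  have hd : p ^ j ∣ p ^ (j + 1) := pow_dvd_pow _ (by omega)
  let f := ZMod.castHom hd (ZMod (p ^ j))
  have toInt : ∀ (n : ℕ) (x : ℤ), ((x : ZMod n) ^ 2 + x + 4 = 0 ↔ (n : ℤ) ∣ x ^ 2 + x + 4) := by
    intro n x
    rw [← ZMod.intCast_zmod_eq_zero_iff_dvd]
    push_cast
    rfl
  refine Nat.card_eq_of_bijective (fun x => ⟨f x.1, ?_⟩) ⟨?_, ?_⟩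
  · have := congrArg f x.2
    rw [map_zero, map_add, map_add, map_pow, map_ofNat] at this
    exact this
  · rintro ⟨x, hx⟩ ⟨y, hy⟩ hxy
    obtain ⟨x, rfl⟩ := ZMod.intCast_surjective x
    obtain ⟨y, rfl⟩ := ZMod.intCast_surjective y
    simp only [Subtype.mk.injEq, map_intCast] at hxy ⊢
    rw [toInt] at hx hy
    rw [ZMod.intCast_eq_intCast_iff_dvd_sub] at hxy ⊢
    have h1 : (p : ℤ) ∣ y - x := dvd_trans (by exact_mod_cast hpj) hxy
    have h2 : (p : ℤ) ∣ y ^ 2 + y + 4 :=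
      dvd_trans (by exact_mod_cast dvd_trans hpj hd) hy
    have h3 := key y x h2 h1
    have h4 : ((p ^ (j + 1) : ℕ) : ℤ) ∣ (y - x) * (y + x + 1) := by
      have := dvd_sub hy hx
      rwa [show y ^ 2 + y + 4 - (x ^ 2 + x + 4) = (y - x) * (y + x + 1) by ring] at this
    refine IsCoprime.dvd_of_dvd_mul_right ?_ h4
    push_cast
    exact IsCoprime.pow_left h3
  · rintro ⟨x, hx⟩
    obtain ⟨x, rfl⟩ := ZMod.intCast_surjective x
    rw [toInt] at hx
    have h2 : (p : ℤ) ∣ x ^ 2 + x + 4 := dvd_trans (by exact_mod_cast hpj) hx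
    obtain ⟨a, b, hab⟩ := key x x h2 (by simp)
    obtain ⟨c, hc⟩ := hx
    push_cast at hc
    refine ⟨⟨((x - p ^ j * (c * b) : ℤ) : ZMod _), ?_⟩, ?_⟩
    · rw [toInt]
      obtain ⟨i, rfl⟩ : ∃ i, j = i + 1 := ⟨j - 1, by omega⟩
      refine ⟨a * c + p ^ i * c ^ 2 * b ^ 2, ?_⟩
      push_cast
      linear_combination hc - c * p ^ (i + 1) * hab
    · simp only [Subtype.mk.injEq, map_intCast]
      rw [ZMod.intCast_eq_intCast_iff_dvd_sub]
      refine ⟨c * b, ?_⟩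
      push_cast
      ring

lemma chi_mod (n : ℕ) : chiNeg15 (n % 15) = chiNeg15 n := by
  have h3 : n % 15 % 3 = n % 3 := by omega
  have h5 : n % 15 % 5 = n % 5 := by omega
  simp [chiNeg15, chiNeg3, chi5, h3, h5]

lemma chi_mul (m n : ℕ) : chiNeg15 (m * n) = chiNeg15 m * chiNeg15 n := by
  rw [← chi_mod, Nat.mul_mod, chi_mod, ← chi_mod m, ← chi_mod n]
  have : ∀ a < 15, ∀ b < 15, chiNeg15 (a * b) = chiNeg15 a * chiNeg15 b := by decide
  exact this _ (Nat.mod_lt _ (by norm_num)) _ (Nat.mod_lt _ (by norm_num))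

lemma chi_abs (n : ℕ) : |chiNeg15 n| ≤ 1 := by
  rw [← chi_mod]
  have : ∀ a < 15, |chiNeg15 a| ≤ 1 := by decide
  exact this _ (Nat.mod_lt _ (by norm_num))

open NumberTheorySymbols in
lemma legendre_chi (p : ℕ) [Fact p.Prime] (h2 : p ≠ 2) : legendreSym p (-15) = chiNeg15 p := by
  have hp : p.Prime := Fact.out
  have hodd : Odd p := hp.odd_of_ne_two h2
  have hodd' : p % 2 = 1 := Nat.odd_iff.1 hodd
  rw [jacobiSym.legendreSym.to_jacobiSym]
  have e1 : J(-15 | p) = J((p : ℤ) | 15) := by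
    rw [show (-15 : ℤ) = -((15 : ℕ) : ℤ) by norm_num, jacobiSym.neg _ hodd,
      ZMod.χ₄_nat_eq_if_mod_four]
    rw [← jacobiSym.quadratic_reciprocity_if (a := 15) (b := p) (by norm_num) hodd']
    have : p % 4 = 1 ∨ p % 4 = 3 := by omega
    rcases this with h | h <;> simp [h, hodd']
  rw [e1, jacobiSym.mod_left, ← chi_mod]
  have : ∀ a < 15, J(((a : ℕ) : ℤ) | 15) = chiNeg15 a := by
    intro a ha
    interval_cases a <;> norm_num [chiNeg15, chiNeg3, chi5]
  have h := this (p % 15) (Nat.mod_lt _ (by norm_num))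
  push_cast at h ⊢
  exact h

lemma rho_prime (p : ℕ) (hp : p.Prime) : ((roots p).card : ℤ) = 1 + chiNeg15 p := by
  by_cases h2 : p = 2
  · subst h2; decide
  haveI : Fact p.Prime := ⟨hp⟩
  rw [← legendre_chi p h2, add_comm, ← legendreSym.card_sqrts p h2, card_roots p hp.ne_zero]
  congr 1
  have h2' : (2 : ZMod p) ≠ 0 := by
    intro h
    have : ((2 : ℕ) : ZMod p) = 0 := by exact_mod_cast h
    rw [ZMod.natCast_eq_zero_iff] at this
    exact h2 ((Nat.prime_dvd_prime_iff_eq hp Nat.prime_two).1 this)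
  have h4 : (4 : ZMod p) ≠ 0 := by
    rw [show (4 : ZMod p) = 2 * 2 by norm_num]; exact mul_ne_zero h2' h2'
  rw [← Nat.card_eq_card_toFinset]
  refine Nat.card_eq_of_bijective (fun x => ⟨2 * x.1 + 1, ?_⟩) ⟨?_, ?_⟩
  · simp only [Set.mem_setOf_eq]
    push_cast
    linear_combination 4 * x.2
  · rintro ⟨x, hx⟩ ⟨y, hy⟩ hxy
    simp only [Subtype.mk.injEq, add_left_inj] at hxy ⊢
    exact mul_left_cancel₀ h2' hxy
  · rintro ⟨y, hy⟩
    simp only [Set.mem_setOf_eq] at hy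
    push_cast at hy
    refine ⟨⟨(y - 1) / 2, ?_⟩, ?_⟩
    · have : 4 * (((y - 1) / 2) ^ 2 + (y - 1) / 2 + 4) = 0 := by
        field_simp
        linear_combination 4 * hy
      exact (mul_eq_zero.1 this).resolve_left h4
    · simp only [Subtype.mk.injEq]
      field_simp
      ring

lemma rho_prime_pow (p : ℕ) (hp : p.Prime) (j : ℕ) :
    ((roots (p ^ (j + 1))).card : ℤ) = chiNeg15 p ^ j + chiNeg15 p ^ (j + 1) := by
  by_cases h15 : p ∣ 15
  · have h35 : p = 3 ∨ p = 5 := by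
      have : p ∣ 3 * 5 := h15
      rcases (Nat.Prime.dvd_mul hp).1 this with h | h
      · exact Or.inl ((Nat.prime_dvd_prime_iff_eq hp (by norm_num)).1 h)
      · exact Or.inr ((Nat.prime_dvd_prime_iff_eq hp (by norm_num)).1 h)
    have hchi : chiNeg15 p = 0 := by rcases h35 with rfl | rfl <;> decide
    rcases j with _ | j
    · rw [zero_add, pow_one, rho_prime p hp]; simp
    · rw [hchi]
      simp only [ne_eq, Nat.add_eq_zero_iff, one_ne_zero, and_false, not_false_eq_true, zero_pow, add_zero]
      have : roots (p ^ (j + 1 + 1)) = ∅ := by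
        rw [roots, Finset.filter_eq_empty_iff]
        intro b _ hb
        have h1 : p ^ 2 ∣ b ^ 2 + b + 4 := dvd_trans (pow_dvd_pow _ (by omega)) hb
        rcases h35 with rfl | rfl
        · have h2 : ∀ x : ZMod 9, x ^ 2 + x + 4 ≠ 0 := by decide
          apply h2 b
          have := (ZMod.natCast_eq_zero_iff (b ^ 2 + b + 4) 9).2 h1
          exact_mod_cast this
        · have h2 : ∀ x : ZMod 25, x ^ 2 + x + 4 ≠ 0 := by decide
          apply h2 b
          have := (ZMod.natCast_eq_zero_iff (b ^ 2 + b + 4) 25).2 h1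
          exact_mod_cast this
      rw [this]; simp
  · have hr : ∀ j, (roots (p ^ (j + 1))).card = (roots p).card := by
      intro j
      induction j with
      | zero => simp
      | succ j ih => rw [rho_lift p hp h15 (j + 1) (by omega), ih]
    rw [hr, rho_prime p hp]
    have : chiNeg15 p = 1 ∨ chiNeg15 p = -1 := by
      rw [← chi_mod]
      have h3 : p % 15 % 3 ≠ 0 := by
        intro h
        have : 3 ∣ p := by omega
        have := (Nat.prime_dvd_prime_iff_eq (by norm_num) hp).1 this
        subst this
        norm_num at h15
      have h5 : p % 15 % 5 ≠ 0 := by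
        intro h
        have : 5 ∣ p := by omega
        have := (Nat.prime_dvd_prime_iff_eq (by norm_num) hp).1 this
        subst this
        norm_num at h15
      have key : ∀ a < 15, a % 3 ≠ 0 → a % 5 ≠ 0 → chiNeg15 a = 1 ∨ chiNeg15 a = -1 := by decide
      exact key _ (Nat.mod_lt _ (by norm_num)) h3 h5
    rcases this with h | h <;> rw [h]
    · simp
    · rw [pow_succ]; ring

open ArithmeticFunction ArithmeticFunction.zeta

def rhoA : ArithmeticFunction ℤ := ⟨fun n => (roots n).card, by simp [roots]⟩
def chiA : ArithmeticFunction ℤ := ⟨fun n => chiNeg15 n, by decide⟩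
def sqA : ArithmeticFunction ℤ := ⟨fun n => if n ≠ 0 ∧ IsSquare n then 1 else 0, by simp⟩

lemma rhoA_mult : rhoA.IsMultiplicative := by
  refine ⟨by decide, ?_⟩
  intro m n h
  simp only [rhoA, coe_mk]
  rw [rho_mul m n h]; push_cast; rfl

lemma chiA_mult : chiA.IsMultiplicative := ⟨(by decide : chiNeg15 1 = 1), fun {m n} _ => chi_mul m n⟩

lemma sqA_mult : sqA.IsMultiplicative := by
  refine ⟨by simp [sqA], ?_⟩
  intro m n h
  simp only [sqA, coe_mk]
  by_cases hm : m = 0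
  · simp [hm]
  by_cases hn : n = 0
  · simp [hn]
  have : IsSquare (m * n) ↔ IsSquare m ∧ IsSquare n := by
    constructor
    · rintro ⟨c, hc⟩
      rw [← sq] at hc
      have h1 := exists_eq_pow_of_mul_eq_pow (Nat.isUnit_iff.2 h) hc
      have h2 := exists_eq_pow_of_mul_eq_pow (Nat.isUnit_iff.2 h.symm) ((mul_comm _ _).trans hc)
      obtain ⟨x, hx⟩ := h1
      obtain ⟨y, hy⟩ := h2
      exact ⟨⟨x, by rw [hx, sq]⟩, ⟨y, by rw [hy, sq]⟩⟩
    · rintro ⟨h1, h2⟩; exact h1.mul h2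
  by_cases h1 : IsSquare m <;> by_cases h2 : IsSquare n <;> simp [hm, hn, this, h1, h2]

lemma sqA_prime_pow (p : ℕ) (hp : p.Prime) (i : ℕ) : sqA (p ^ i) = if Even i then 1 else 0 := by
  simp only [sqA, coe_mk]
  have : IsSquare (p ^ i) ↔ Even i := by
    constructor
    · rintro ⟨c, hc⟩
      obtain ⟨k, _, rfl⟩ := (Nat.dvd_prime_pow hp).1 (Dvd.intro _ hc.symm)
      rw [← pow_add] at hc
      exact ⟨k, Nat.pow_right_injective hp.two_le hc⟩
    · intro h; exact h.isSquare_pow p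
  simp [this, hp.ne_zero]

lemma conv_pp (f g : ArithmeticFunction ℤ) (p : ℕ) (hp : p.Prime) (i : ℕ) :
    (f * g) (p ^ i) = ∑ j ∈ Finset.range (i + 1), f (p ^ j) * g (p ^ (i - j)) := by
  rw [mul_apply, Nat.sum_divisorsAntidiagonal (fun x y => f x * g y), Nat.sum_divisors_prime_pow hp]
  refine Finset.sum_congr rfl fun j hj => ?_
  rw [Nat.pow_div (by simp at hj; omega) hp.pos]

lemma chiA_pow (p j : ℕ) : chiA (p ^ j) = chiNeg15 p ^ j := by
  induction j with
  | zero => simp [chiA]; decide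
  | succ j ih =>
    rw [pow_succ, pow_succ, ← ih]
    exact chi_mul _ _

lemma conv_eq : sqA * rhoA = (ζ : ArithmeticFunction ℤ) * chiA := by
  rw [IsMultiplicative.eq_iff_eq_on_prime_powers _ (sqA_mult.mul rhoA_mult) _
    (isMultiplicative_zeta.natCast.mul chiA_mult)]
  intro p i hp
  rw [mul_comm sqA, mul_comm _ chiA, conv_pp _ _ p hp, conv_pp _ _ p hp]
  have e1 : ∀ i, ∑ j ∈ Finset.range (i + 1), chiA (p ^ j) * (ζ : ArithmeticFunction ℤ) (p ^ (i - j))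
      = ∑ j ∈ Finset.range (i + 1), chiNeg15 p ^ j := by
    intro i
    refine Finset.sum_congr rfl fun j hj => ?_
    rw [chiA_pow]
    simp [hp.ne_zero]
  rw [e1]
  have e0 : rhoA (p ^ 0) = 1 := by simpa using rhoA_mult.1
  have er : ∀ j, rhoA (p ^ (j + 1)) = chiNeg15 p ^ j + chiNeg15 p ^ (j + 1) :=
    fun j => rho_prime_pow p hp j
  induction i using Nat.strong_induction_on with
  | _ i ih =>
    match i with
    | 0 => 
      have := sqA_prime_pow p hp 0
      simp at this
      simp [e0, this] 
      simpa using e0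
    | 1 => 
      have h0 := sqA_prime_pow p hp 0
      have h1 := sqA_prime_pow p hp 1
      have := er 0
      rw [Finset.sum_range_succ, Finset.sum_range_succ, Finset.sum_range_succ,
        Finset.sum_range_succ]
      simp only [Finset.sum_range_zero, e0, Nat.sub_zero, h1, Nat.sub_self, h0]
      rw [this]
      simp
    | i + 2 =>
      rw [Finset.sum_range_succ, Finset.sum_range_succ, Finset.sum_range_succ _ (i + 2),
        Finset.sum_range_succ _ (i + 1), ← ih i (by omega)]
      have h0 := sqA_prime_pow p hp 0
      have h1 := sqA_prime_pow p hp 1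
      have e3 : ∑ j ∈ Finset.range (i + 1), rhoA (p ^ j) * sqA (p ^ (i + 2 - j))
        = ∑ j ∈ Finset.range (i + 1), rhoA (p ^ j) * sqA (p ^ (i - j)) := by
        refine Finset.sum_congr rfl fun j hj => ?_
        rw [sqA_prime_pow p hp, sqA_prime_pow p hp]
        simp only [Finset.mem_range] at hj
        have : i + 2 - j = i - j + 2 := by omega
        simp [this, Nat.even_add]
      rw [e3, show i + 2 - (i + 1) = 1 by omega, Nat.sub_self, h0, h1, er (i + 1)]
      simp
      ring
end QF
namespace QF

def qf (x : Bool × ℤ × ℤ) : ℤ := A x.1 * x.2.1 ^ 2 + x.2.1 * x.2.2 + C x.1 * x.2.2 ^ 2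

lemma qf_nonneg (x : Bool × ℤ × ℤ) : 0 ≤ qf x := by
  obtain ⟨q, m, k⟩ := x
  cases q <;> simp only [qf, A, C] <;> simp
  · nlinarith [sq_nonneg (2 * m + k), sq_nonneg k]
  · nlinarith [sq_nonneg (m + k), sq_nonneg k, sq_nonneg m]

lemma qf_pos (x : Bool × ℤ × ℤ) (h : x.2 ≠ 0) : 0 < qf x := by
  obtain ⟨q, m, k⟩ := x
  have h' : 0 < m ^ 2 ∨ 0 < k ^ 2 := by
    by_contra! hh
    apply h
    have h1 : m = 0 := by nlinarith
    have h2 : k = 0 := by nlinarith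
    simp [h1, h2]
  cases q <;> simp only [qf, A, C] <;> simp <;> rcases h' with h' | h' 
  · nlinarith [sq_nonneg (8 * k + m), sq_nonneg k]
  · nlinarith [sq_nonneg (2 * m + k), sq_nonneg k]
  · nlinarith [sq_nonneg (m + k), sq_nonneg k, sq_nonneg m]
  · nlinarith [sq_nonneg (m + k), sq_nonneg k, sq_nonneg m]

abbrev Xn (n : ℕ) : Type := {x : Bool × ℤ × ℤ // qf x = n}

abbrev Yn (n : ℕ) : Type := {y : ℕ × Mat // 0 < y.1 ∧ y.2.det = 1 ∧ 0 ≤ y.2.fb ∧ y.2.fb < y.2.fa ∧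
  (y.1 : ℤ) ^ 2 * y.2.fa = n}

def YtoX (n : ℕ) (y : Yn n) : Xn n :=
  ⟨(y.1.2.q, y.1.1 * y.1.2.m, y.1.1 * y.1.2.k), by
    refine Eq.trans ?_ y.2.2.2.2.2
    simp only [qf, Mat.fa]
    ring⟩

lemma det_gcd (x : Mat) (h : x.det = 1) : Int.gcd x.m x.k = 1 := by
  rw [← Int.isCoprime_iff_gcd_eq_one]
  refine ⟨x.v, -x.u, ?_⟩
  simp only [Mat.det] at h
  linear_combination h

lemma YtoX_bij (n : ℕ) (hn : 0 < n) : Function.Bijective (YtoX n) := by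
  constructor
  · rintro ⟨⟨d, x⟩, hd, hdet, hb0, hb1, hN⟩ ⟨⟨d', x'⟩, hd', hdet', hb0', hb1', hN'⟩ h
    simp only [YtoX, Subtype.mk.injEq, Prod.mk.injEq] at h
    obtain ⟨hq, hm, hk⟩ := h
    replace hdet : x.det = 1 := hdet
    replace hb0 : 0 ≤ x.fb := hb0
    replace hb1 : x.fb < x.fa := hb1
    replace hdet' : x'.det = 1 := hdet'
    replace hb0' : 0 ≤ x'.fb := hb0'
    replace hb1' : x'.fb < x'.fa := hb1'
    have hdd : d = d' := by
      have h1 : Int.gcd (d * x.m) (d * x.k) = Int.gcd (d' * x'.m) (d' * x'.k) := by rw [hm, hk]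
      rw [Int.gcd_mul_left, Int.gcd_mul_left, det_gcd x hdet, det_gcd x' hdet'] at h1
      simpa using h1
    subst hdd
    have hd0 : (d : ℤ) ≠ 0 := by exact_mod_cast hd.ne'
    replace hm := mul_left_cancel₀ hd0 hm
    replace hk := mul_left_cancel₀ hd0 hk
    obtain ⟨q, m, k, u, v⟩ := x
    obtain ⟨q', m', k', u', v'⟩ := x'
    dsimp only at hq hm hk
    subst hq hm hk
    -- the second columns differ by a multiple of the first
    have key : ∃ t : ℤ, u' = u + t * m ∧ v' = v + t * k := by
      simp only [Mat.det] at hdet hdet'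
      refine ⟨u' * v - u * v', ?_, ?_⟩
      · linear_combination u * hdet' - u' * hdet 
      · linear_combination v * hdet' - v' * hdet 
    obtain ⟨t, rfl, rfl⟩ := key
    have e := shift_fb t ⟨q, m, k, u, v⟩ hdet
    have e2 := shift_fa t ⟨q, m, k, u, v⟩
    simp only [shift, Equiv.coe_fn_mk] at e e2
    rw [e] at hb0' hb1'
    rw [e2] at hb1'
    have ht : t = 0 := by
      have h1 : t < 1 := by nlinarith
      have h2 : -1 < t := by nlinarith
      omega
    subst ht
    simp
  · rintro ⟨⟨q, m, k⟩, hx⟩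
    have hne : ¬ (m = 0 ∧ k = 0) := by
      rintro ⟨rfl, rfl⟩
      simp [qf] at hx
      omega
    have hg : 0 < Int.gcd m k := Int.gcd_pos_iff.2 (by tauto)
    obtain ⟨g, hgpos, m', k', hco, hm, hk⟩ : ∃ g : ℕ, 0 < g ∧ ∃ m' k' : ℤ, IsCoprime m' k' ∧ 
        m = g * m' ∧ k = g * k' := by
      obtain ⟨m', k', h1, h2, h3⟩ := Int.exists_gcd_one hg
      exact ⟨_, hg, m', k', Int.isCoprime_iff_gcd_eq_one.2 h1, by rw [mul_comm]; exact h2,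
        by rw [mul_comm]; exact h3⟩
    obtain ⟨v, u, huv⟩ := hco
    let x : Mat := ⟨q, m', k', -u, v⟩
    have hxd : x.det = 1 := by simp only [x, Mat.det]; linear_combination huv
    have hN : (g : ℤ) ^ 2 * x.fa = n := by
      rw [← hx, hm, hk]
      simp only [qf, Mat.fa, x]
      ring
    have ha : 0 < x.fa := by
      by_contra! h
      have : (0 : ℤ) < n := by exact_mod_cast hn
      nlinarith [sq_nonneg (g : ℤ)]
    let t : ℤ := -(x.fb / x.fa)
    refine ⟨⟨(g, shift t x), hgpos, ?_, ?_, ?_, ?_⟩, ?_⟩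
    · rw [shift_det]; exact hxd
    · dsimp only
      rw [shift_fb t x hxd]
      have := Int.emod_nonneg x.fb ha.ne'
      have h2 := Int.emod_add_mul_ediv x.fb x.fa
      simp only [t]
      linarith
    · dsimp only
      rw [shift_fb t x hxd, shift_fa]
      have := Int.emod_lt_of_pos x.fb ha
      have h2 := Int.emod_add_mul_ediv x.fb x.fa
      simp only [t]
      linarith
    · rw [shift_fa]; exact hN
    · simp only [YtoX, shift, x, Equiv.coe_fn_mk, ← hm, ← hk]

def Tn (n : ℕ) : Finset (Σ _ : ℕ × ℕ, ℕ) :=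
  (n.divisorsAntidiagonal.filter (fun p => p.1 ≠ 0 ∧ IsSquare p.1)).sigma (fun p => roots p.2)

open ArithmeticFunction in
lemma card_Tn (n : ℕ) : ((Tn n).card : ℤ) = (sqA * rhoA) n := by
  rw [Tn, Finset.card_sigma, mul_apply, Finset.sum_filter]
  push_cast
  refine Finset.sum_congr rfl fun p _ => ?_
  simp only [sqA, rhoA, coe_mk]
  split_ifs <;> simp

lemma YtoT_mem (n : ℕ) (hn : 0 < n) (y : Yn n) :
    (⟨(y.1.1 ^ 2, y.1.2.fa.toNat), y.1.2.fb.toNat⟩ : Σ _ : ℕ × ℕ, ℕ) ∈ Tn n := by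
  obtain ⟨⟨d, x⟩, hd, hdet, hb0, hb1, hN⟩ := y
  replace hdet : x.det = 1 := hdet
  replace hb0 : 0 ≤ x.fb := hb0
  replace hb1 : x.fb < x.fa := hb1
  simp only [Tn, Finset.mem_sigma, Finset.mem_filter, Nat.mem_divisorsAntidiagonal, roots,
    Finset.mem_range]
  have ha : ((x.fa.toNat : ℕ) : ℤ) = x.fa := Int.toNat_of_nonneg (by omega)
  have hb : ((x.fb.toNat : ℕ) : ℤ) = x.fb := Int.toNat_of_nonneg (by omega)
  refine ⟨⟨⟨?_, hn.ne'⟩, (by positivity), ⟨d, sq d⟩⟩, by omega, ?_⟩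
  · zify; rw [ha]; exact hN
  · zify; rw [ha, hb, ← x.disc hdet]; exact Dvd.intro _ rfl

def YtoT (n : ℕ) (hn : 0 < n) (y : Yn n) : Tn n := ⟨_, YtoT_mem n hn y⟩

lemma card_fiber (n : ℕ) (hn : 0 < n) (t : Tn n) : Nat.card {y // YtoT n hn y = t} = 2 := by
  obtain ⟨⟨⟨e, a⟩, b⟩, ht⟩ := t
  have ht' := ht
  simp only [Tn, Finset.mem_sigma, Finset.mem_filter, Nat.mem_divisorsAntidiagonal, roots,
    Finset.mem_range] at ht'
  obtain ⟨⟨⟨hea, -⟩, he0, ⟨d, hd⟩⟩, hba, c, hc⟩ := ht'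
  have hd0 : 0 < d := by
    rcases Nat.eq_zero_or_pos d with h | h
    · subst h; simp at hd; exact absurd hd he0
    · exact h
  have hac : (a : ℤ) * c = (b : ℤ) ^ 2 + b + 4 := by exact_mod_cast hc.symm
  rw [← card_G a b c (by omega) hac, ← Nat.card_coe_set_eq]
  refine Nat.card_eq_of_bijective (fun y => ⟨y.1.1.2, ?_⟩) ⟨?_, ?_⟩
  · obtain ⟨⟨⟨d', x⟩, hd', hdet, hb0, hb1, hN⟩, hy⟩ := y
    simp only [YtoT, Subtype.mk.injEq, Sigma.mk.injEq, Prod.mk.injEq, heq_eq_eq] at hy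
    replace hdet : x.det = 1 := hdet
    replace hb0 : 0 ≤ x.fb := hb0
    replace hb1 : x.fb < x.fa := hb1
    obtain ⟨⟨hy1, hy2⟩, hy3⟩ := hy
    have ha : x.fa = a := by omega
    have hb : x.fb = b := by omega
    refine ⟨hdet, ha, hb, ?_⟩
    have h1 := x.disc hdet
    rw [ha, hb, ← hac] at h1
    exact mul_left_cancel₀ (by omega) h1
  · rintro ⟨⟨⟨d', x⟩, hd', hdet, hb0, hb1, hN⟩, hy⟩ ⟨⟨⟨d'', x'⟩, hd'', hdet', hb0', hb1', hN'⟩, hy'⟩ hh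
    simp only [YtoT, Subtype.mk.injEq, Sigma.mk.injEq, Prod.mk.injEq, heq_eq_eq] at hy hy'
    have hh' : x = x' := congrArg Subtype.val hh
    refine Subtype.ext (Subtype.ext (Prod.ext ?_ hh'))
    have : d' ^ 2 = d'' ^ 2 := by rw [hy.1.1, hy'.1.1]
    exact Nat.pow_left_injective (n := 2) (by norm_num) this
  · rintro ⟨x, hdet, ha, hb, hc⟩
    refine ⟨⟨⟨(d, x), hd0, hdet, ?_, ?_, ?_⟩, ?_⟩, rfl⟩
    · dsimp only; omega
    · dsimp only; omega
    · dsimp only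
      rw [ha, ← hea, hd]
      push_cast
      ring
    · simp only [YtoT, Subtype.mk.injEq, Sigma.mk.injEq, Prod.mk.injEq, heq_eq_eq]
      rw [ha, hb, hd]
      simp [sq]

lemma Xn_card (n : ℕ) (hn : 0 < n) :
    Finite (Xn n) ∧ (Nat.card (Xn n) : ℤ) = 2 * (sqA * rhoA) n := by
  have hf : ∀ t, Finite {y // YtoT n hn y = t} := fun t =>
    Nat.finite_of_card_ne_zero (by rw [card_fiber n hn t]; norm_num)
  have e := Equiv.sigmaFiberEquiv (YtoT n hn)
  have hY : Finite (Yn n) := Finite.of_equiv _ e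
  refine ⟨Finite.of_surjective _ (YtoX_bij n hn).2, ?_⟩
  rw [← Nat.card_eq_of_bijective _ (YtoX_bij n hn), ← Nat.card_congr e, Nat.card_sigma]
  simp only [card_fiber]
  rw [← card_Tn]
  simp [mul_comm]
end QF
namespace QF
open ArithmeticFunction ArithmeticFunction.zeta

abbrev XX : Type := {p : ℤ × ℤ // p ≠ 0} × Bool

def NN (x : XX) : ℕ := (qf (x.2, x.1.1)).toNat

lemma NN_pos (x : XX) : 0 < NN x := by
  have := qf_pos (x.2, x.1.1) x.1.2
  simp only [NN]; omega

lemma NN_cast (x : XX) : (NN x : ℤ) = qf (x.2, x.1.1) := by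
  have := qf_pos (x.2, x.1.1) x.1.2
  simp only [NN]; omega

def fibEquiv (n : ℕ) (hn : 0 < n) : {x : XX // NN x = n} ≃ Xn n where
  toFun x := ⟨(x.1.2, x.1.1.1), by rw [← NN_cast, x.2]⟩
  invFun x := ⟨(⟨x.1.2, by
    intro h
    have := x.2
    rw [show x.1 = (x.1.1, x.1.2) from rfl, h] at this
    simp [qf] at this
    omega⟩, x.1.1), by
      have := x.2
      have h2 := NN_cast (⟨x.1.2, by
        intro h
        have := x.2
        rw [show x.1 = (x.1.1, x.1.2) from rfl, h] at this
        simp [qf] at this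
        omega⟩, x.1.1)
      simp only [Prod.mk.eta] at h2
      exact_mod_cast h2.trans this⟩
  left_inv x := rfl
  right_inv x := rfl

lemma fib_card (n : ℕ) : Finite {x : XX // NN x = n} ∧
    (Nat.card {x : XX // NN x = n} : ℤ) = 2 * ((ζ : ArithmeticFunction ℤ) * chiA) n := by
  rcases Nat.eq_zero_or_pos n with rfl | hn
  · have : IsEmpty {x : XX // NN x = 0} := ⟨fun x => (NN_pos x.1).ne' x.2⟩
    exact ⟨inferInstance, by simp⟩
  · obtain ⟨h1, h2⟩ := Xn_card n hn
    refine ⟨Finite.of_equiv _ (fibEquiv n hn).symm, ?_⟩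
    rw [Nat.card_congr (fibEquiv n hn), h2, conv_eq]

def rC : ArithmeticFunction ℂ := (ζ : ArithmeticFunction ℂ) * (chiA : ArithmeticFunction ℂ)

lemma rC_apply (n : ℕ) : rC n = ((((ζ : ArithmeticFunction ℤ) * chiA) n : ℤ) : ℂ) := by
  have : rC = ((((ζ : ArithmeticFunction ℤ) * chiA : ArithmeticFunction ℤ)) : ArithmeticFunction ℂ) := by
    rw [rC, intCoe_mul]
    simp
  rw [this, intCoe_apply]

lemma fib_card' (n : ℕ) : (Nat.card {x : XX // NN x = n} : ℂ) = 2 * rC n := by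
  rw [rC_apply]
  exact_mod_cast (fib_card n).2

lemma chi_summable (s : ℂ) (hs : 1 < s.re) :
    LSeriesSummable (fun n => (chiA : ArithmeticFunction ℂ) n) s := by
  refine LSeriesSummable_of_bounded_of_one_lt_re (m := 1) (fun n _ => ?_) hs
  rw [intCoe_apply, Complex.norm_intCast]
  exact_mod_cast chi_abs n

lemma zeta_summable (s : ℂ) (hs : 1 < s.re) :
    LSeriesSummable (fun n => (ζ : ArithmeticFunction ℂ) n) s := by
  have := LSeriesSummable_zeta_iff.mpr hs
  simpa using this

lemma rC_summable (s : ℂ) (hs : 1 < s.re) : LSeriesSummable (fun n => rC n) s :=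
  ArithmeticFunction.LSeriesSummable_mul (zeta_summable s hs) (chi_summable s hs)

lemma rC_LSeries (s : ℂ) (hs : 1 < s.re) :
    LSeries (fun n => rC n) s = riemannZeta s * LSer chiNeg15 s := by
  rw [rC, ArithmeticFunction.LSeries_mul' (zeta_summable s hs) (chi_summable s hs)]
  congr 1
  · rw [← LSeries_zeta_eq_riemannZeta hs]
    simp
  · rw [LSeries, (chi_summable s hs).tsum_eq_zero_add, LSer]
    simp only [LSeries.term_zero, zero_add]
    refine tsum_congr fun n => ?_
    rw [LSeries.term_of_ne_zero (by omega), intCoe_apply]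
    push_cast
    rfl

lemma lat_sum (s : ℂ) (hs : 1 < s.re) :
    Summable (fun x : XX => 1 / ((NN x : ℂ) ^ s)) ∧
    ∑' x : XX, 1 / ((NN x : ℂ) ^ s) = 2 * (riemannZeta s * LSer chiNeg15 s) := by
  have hfin : ∀ n, Finite {x : XX // NN x = n} := fun n => (fib_card n).1
  have hval : ∀ n, ∑' x : {x : XX // NN x = n}, 1 / ((NN x.1 : ℂ) ^ s)
      = 2 * LSeries.term (fun n => rC n) s n := by
    intro n
    have : ∀ x : {x : XX // NN x = n}, 1 / ((NN x.1 : ℂ) ^ s) = 1 / ((n : ℂ) ^ s) := by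
      intro x; rw [x.2]
    rw [tsum_congr this, tsum_const, nsmul_eq_mul, fib_card' n]
    rcases Nat.eq_zero_or_pos n with rfl | hn
    · simp
    · rw [LSeries.term_of_ne_zero hn.ne']; ring
  have hnorm : ∀ n, ∑' x : {x : XX // NN x = n}, ‖1 / ((NN x.1 : ℂ) ^ s)‖
      = 2 * ‖LSeries.term (fun n => rC n) s n‖ := by
    intro n
    have : ∀ x : {x : XX // NN x = n}, ‖1 / ((NN x.1 : ℂ) ^ s)‖ = ‖1 / ((n : ℂ) ^ s)‖ := by
      intro x; rw [x.2]
    have h2 : (Nat.card {x : XX // NN x = n} : ℝ) = 2 * ‖rC n‖ := by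
      have := congrArg norm (fib_card' n)
      simpa using this
    rw [tsum_congr this, tsum_const, nsmul_eq_mul, h2]
    rcases Nat.eq_zero_or_pos n with rfl | hn
    · simp
    · rw [LSeries.term_of_ne_zero hn.ne', norm_div, norm_div, norm_one]; ring
  have hsum : Summable (fun x : XX => 1 / ((NN x : ℂ) ^ s)) := by
    apply Summable.of_norm
    rw [← (Equiv.sigmaFiberEquiv NN).summable_iff]
    refine (summable_sigma_of_nonneg (fun _ => norm_nonneg _)).2 ?_
    refine ⟨fun n => Summable.of_finite, ?_⟩
    refine Summable.congr ((rC_summable s hs).norm.mul_left 2) fun n => ?_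
    exact (hnorm n).symm
  refine ⟨hsum, ?_⟩
  rw [← (Equiv.sigmaFiberEquiv NN).tsum_eq]
  have h3 := (Equiv.sigmaFiberEquiv NN).summable_iff.2 hsum
  refine (Summable.tsum_sigma h3).trans ?_
  rw [← rC_LSeries s hs, LSeries, ← tsum_mul_left]
  exact tsum_congr hval

end QF

/-- Lemma 3.3 (1): for `Re(s) > 1`,
`∑'_{(m,k)≠0} [ (2m²+mk+2k²)^{-s} + (m²+mk+4k²)^{-s} ] = 2 ζ(s) L(χ₋₁₅, s)`. -/
theorem lattice_sum_eq_two_zeta_L (s : ℂ) (hs : 1 < s.re) :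
    (∑' p : {p : ℤ × ℤ // p ≠ 0},
        (1 / ((2 * (p.1.1 : ℂ) ^ 2 + (p.1.1 : ℂ) * (p.1.2 : ℂ) + 2 * (p.1.2 : ℂ) ^ 2) ^ s) +
          1 / (((p.1.1 : ℂ) ^ 2 + (p.1.1 : ℂ) * (p.1.2 : ℂ) + 4 * (p.1.2 : ℂ) ^ 2) ^ s))) =
      2 * riemannZeta s * LSer chiNeg15 s := by
  obtain ⟨h1, h2⟩ := QF.lat_sum s hs
  rw [mul_assoc, ← h2, h1.tsum_prod]
  refine tsum_congr fun p => ?_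
  rw [tsum_bool, add_comm]
  have hc : ∀ q, ((QF.NN (p, q) : ℕ) : ℂ) = ((QF.qf (q, p.1) : ℤ) : ℂ) := by
    intro q
    rw [← QF.NN_cast (p, q)]
    simp
  rw [hc, hc]
  simp [QF.qf, QF.A, QF.C]
end

section
/- For every complex s with Re(s) > 1, ∑'_{(m,k)} [ 1/(3m² + 5k²)^s + 1/(m² + 15k²)^s ] = 2·(1 + 2^{1−2s} − 2^{1−s})·ζ(s)·L(χ_{-15}, s), where ζ is the Riemann zeta function. -/
open Set

/-- Number of representations. -/
noncomputable def rep (f : ℤ × ℤ → ℤ) (n : ℤ) : ℕ := Set.ncard {v | f v = n}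
/-- Number of representations of `n / p`. -/
noncomputable def repd (f : ℤ × ℤ → ℤ) (p n : ℤ) : ℕ := Set.ncard {v | p * f v = n}

def qf (a b c : ℤ) (v : ℤ × ℤ) : ℤ := a * v.1 ^ 2 + b * v.1 * v.2 + c * v.2 ^ 2

def Eqv (f g : ℤ × ℤ → ℤ) : Prop := ∃ e : (ℤ × ℤ) ≃ (ℤ × ℤ), ∀ v, f (e v) = g v

lemma Eqv.rep {f g : ℤ × ℤ → ℤ} (h : Eqv f g) (n : ℤ) : rep f n = rep g n := by
  obtain ⟨e, he⟩ := h
  unfold _root_.rep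
  rw [← Set.ncard_image_of_injective {v | g v = n} e.injective]
  congr 1
  ext v
  simp only [mem_ofPred_eq, mem_image]
  constructor
  · intro h; exact ⟨e.symm v, by rw [← he]; simpa using h, by simp⟩
  · rintro ⟨w, hw, rfl⟩; rw [he]; exact hw

lemma Eqv.trans {f g h : ℤ × ℤ → ℤ} (h1 : Eqv f g) (h2 : Eqv g h) : Eqv f h := by
  obtain ⟨e, he⟩ := h1
  obtain ⟨e', he'⟩ := h2
  exact ⟨e'.trans e, fun v => by simp [he, he']⟩

lemma eqv_swap (a b c : ℤ) : Eqv (qf a b c) (qf c b a) :=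
  ⟨Equiv.prodComm _ _, fun v => by simp [qf]; ring⟩

lemma eqv_neg (a b c : ℤ) : Eqv (qf a b c) (qf a (-b) c) :=
  ⟨⟨fun v => (v.1, -v.2), fun v => (v.1, -v.2), fun v => by simp, fun v => by simp⟩,
    fun v => by simp [qf]⟩

lemma eqv_shift (a b c k : ℤ) : Eqv (qf a b c) (qf a (b + 2 * a * k) (a * k ^ 2 + b * k + c)) :=
  ⟨⟨fun v => (v.1 + k * v.2, v.2), fun v => (v.1 - k * v.2, v.2), fun v => by simp,
    fun v => by simp⟩, fun v => by simp [qf]; ring⟩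

lemma eqv_refl (f : ℤ × ℤ → ℤ) : Eqv f f := ⟨Equiv.refl _, fun _ => rfl⟩

lemma reduce (N : ℕ) : ∀ a b c : ℤ, b.natAbs = N → 0 < a → b ^ 2 - 4 * a * c = -15 →
    Eqv (qf a b c) (qf 1 1 4) ∨ Eqv (qf a b c) (qf 2 1 2) := by
  induction N using Nat.strong_induction_on with
  | _ N ih =>
    -- the case `a ≤ c`
    have key : ∀ a b c : ℤ, b.natAbs = N → 0 < a → a ≤ c → b ^ 2 - 4 * a * c = -15 →
        Eqv (qf a b c) (qf 1 1 4) ∨ Eqv (qf a b c) (qf 2 1 2) := by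
      intro a b c hb ha hac hd
      by_cases hba : |b| ≤ a
      · have h1 : b ^ 2 ≤ a ^ 2 := by
          rw [← sq_abs b]; exact pow_le_pow_left₀ (abs_nonneg _) hba 2
        have h2 : a ≤ 2 := by nlinarith
        have hb2 := abs_le.mp hba
        have h3 : a = 1 ∨ a = 2 := by omega
        rcases h3 with rfl | rfl
        · have h4 : b = -1 ∨ b = 0 ∨ b = 1 := by omega
          rcases h4 with rfl | rfl | rfl
          · left
            obtain rfl : c = 4 := by omega
            exact eqv_neg 1 (-1) 4
          · omega
          · left
            obtain rfl : c = 4 := by omega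
            exact eqv_refl _
        · have h4 : b = -2 ∨ b = -1 ∨ b = 0 ∨ b = 1 ∨ b = 2 := by omega
          rcases h4 with rfl | rfl | rfl | rfl | rfl
          · omega
          · right
            obtain rfl : c = 2 := by omega
            exact eqv_neg 2 (-1) 2
          · omega
          · right
            obtain rfl : c = 2 := by omega
            exact eqv_refl _
          · omega
      · push Not at hba
        rcases le_total 0 b with h0 | h0
        · rw [abs_of_nonneg h0] at hba
          have := ih (b + 2 * a * (-1)).natAbs (by omega) a (b + 2 * a * (-1))
            (a * (-1) ^ 2 + b * (-1) + c) rfl ha (by linear_combination hd)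
          exact this.imp (eqv_shift a b c (-1)).trans (eqv_shift a b c (-1)).trans
        · rw [abs_of_nonpos h0] at hba
          have := ih (b + 2 * a * 1).natAbs (by omega) a (b + 2 * a * 1)
            (a * 1 ^ 2 + b * 1 + c) rfl ha (by linear_combination hd)
          exact this.imp (eqv_shift a b c 1).trans (eqv_shift a b c 1).trans
    intro a b c hb ha hd
    rcases le_total a c with h | h
    · exact key a b c hb ha h hd
    · have hc : 0 < c := by
        by_contra hc
        nlinarith [sq_nonneg b, mul_nonneg ha.le (sub_nonneg.mpr (not_lt.mp hc))]
      have := key c b a hb hc h (by linear_combination hd)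
      exact this.imp (eqv_swap a b c).trans (eqv_swap a b c).trans

lemma C_mod3 (v : ℤ × ℤ) : qf 1 1 4 v % 3 ≠ 2 := by
  obtain ⟨x, y⟩ := v
  have hx : x % 3 = 0 ∨ x % 3 = 1 ∨ x % 3 = 2 := by omega
  have hy : y % 3 = 0 ∨ y % 3 = 1 ∨ y % 3 = 2 := by omega
  rcases hx with hx | hx | hx <;> rcases hy with hy | hy | hy <;>
    simp [qf, pow_two, Int.add_emod, Int.mul_emod, hx, hy]

lemma D_mod3 (v : ℤ × ℤ) : qf 2 1 2 v % 3 ≠ 1 := by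
  obtain ⟨x, y⟩ := v
  have hx : x % 3 = 0 ∨ x % 3 = 1 ∨ x % 3 = 2 := by omega
  have hy : y % 3 = 0 ∨ y % 3 = 1 ∨ y % 3 = 2 := by omega
  rcases hx with hx | hx | hx <;> rcases hy with hy | hy | hy <;>
    simp [qf, pow_two, Int.add_emod, Int.mul_emod, hx, hy]

lemma classC {a b c : ℤ} (ha : 0 < a) (h3 : a % 3 = 1) (hd : b ^ 2 - 4 * a * c = -15) (n : ℤ) :
    rep (qf a b c) n = rep (qf 1 1 4) n := by
  rcases reduce _ a b c rfl ha hd with h | h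
  · exact h.rep n
  · exfalso
    obtain ⟨e, he⟩ := h
    have := D_mod3 (e.symm (1, 0))
    rw [← he] at this
    simp [qf] at this
    exact this h3

lemma classD {a b c : ℤ} (ha : 0 < a) (h3 : a % 3 = 2) (hd : b ^ 2 - 4 * a * c = -15) (n : ℤ) :
    rep (qf a b c) n = rep (qf 2 1 2) n := by
  rcases reduce _ a b c rfl ha hd with h | h
  · exfalso
    obtain ⟨e, he⟩ := h
    have := C_mod3 (e.symm (1, 0))
    rw [← he] at this
    simp [qf] at this
    exact this h3
  · exact h.rep n

/-- finiteness -/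
lemma fin_of {f : ℤ × ℤ → ℤ} (M : ℤ) (h : ∀ v, v.1 ^ 2 + v.2 ^ 2 ≤ M * f v) (n : ℤ) :
    {v | f v = n}.Finite := by
  apply Set.Finite.subset ((Set.finite_Icc (-(M * n)) (M * n)).prod (Set.finite_Icc (-(M * n)) (M * n)))
  rintro ⟨x, y⟩ hv
  have h1 := h (x, y)
  simp only [mem_ofPred_eq] at hv
  rw [hv] at h1
  simp only at h1
  simp only [mem_prod, mem_Icc]
  have hx : |x| ≤ x ^ 2 := by rw [← sq_abs]; nlinarith [Int.le_self_sq |x|]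
  have hy : |y| ≤ y ^ 2 := by rw [← sq_abs]; nlinarith [Int.le_self_sq |y|]
  have := sq_nonneg x
  have := sq_nonneg y
  exact ⟨abs_le.mp (by linarith), abs_le.mp (by linarith)⟩

lemma finC (n : ℤ) : {v | qf 1 1 4 v = n}.Finite :=
  fin_of 4 (fun v => by simp only [qf]; nlinarith [sq_nonneg (v.1 + v.2), sq_nonneg v.1, sq_nonneg v.2]) n
lemma finD (n : ℤ) : {v | qf 2 1 2 v = n}.Finite :=
  fin_of 4 (fun v => by simp only [qf]; nlinarith [sq_nonneg (v.1 + v.2), sq_nonneg v.1, sq_nonneg v.2]) n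
lemma finA (n : ℤ) : {v | qf 1 0 15 v = n}.Finite :=
  fin_of 4 (fun v => by simp only [qf]; nlinarith [sq_nonneg v.1, sq_nonneg v.2]) n
lemma finB (n : ℤ) : {v | qf 3 0 5 v = n}.Finite :=
  fin_of 4 (fun v => by simp only [qf]; nlinarith [sq_nonneg v.1, sq_nonneg v.2]) n

/-- one map -/
lemma one_map {f g : ℤ × ℤ → ℤ} {m n : ℤ} (e : ℤ × ℤ → ℤ × ℤ) (he : Function.Injective e)
    (h1 : ∀ v, g v = n → f (e v) = m) (h2 : ∀ v, f v = m → ∃ w, g w = n ∧ e w = v) :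
    rep f m = rep g n := by
  unfold rep
  rw [← Set.ncard_image_of_injective {v | g v = n} he]
  congr 1
  ext v
  simp only [mem_ofPred_eq, mem_image]
  exact ⟨h2 v, by rintro ⟨w, hw, rfl⟩; exact h1 w hw⟩

lemma one_map' {f g : ℤ × ℤ → ℤ} {p n : ℤ} (hp : p ≠ 0) (e : ℤ × ℤ → ℤ × ℤ)
    (he : Function.Injective e)
    (h1 : ∀ v, f (e v) = p * g v) (h2 : ∀ v, p ∣ f v → ∃ w, e w = v) :
    rep f (p * n) = rep g n := by
  refine one_map e he (fun v hv => by rw [h1, hv]) fun v hv => ?_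
  obtain ⟨w, rfl⟩ := h2 v ⟨n, hv⟩
  rw [h1] at hv
  exact ⟨w, mul_left_cancel₀ hp hv, rfl⟩

lemma two_map {a b c : ℤ} {g1 g2 : ℤ × ℤ → ℤ} {p n : ℤ} (hp : p ≠ 0)
    (hfin : ∀ n, {v | qf a b c v = n}.Finite) (e1 e2 : ℤ × ℤ → ℤ × ℤ)
    (he1 : Function.Injective e1) (he2 : Function.Injective e2)
    (h1 : ∀ v, qf a b c (e1 v) = p * g1 v) (h2 : ∀ v, qf a b c (e2 v) = p * g2 v)
    (h3 : ∀ v, p ∣ qf a b c v → (∃ w, e1 w = v) ∨ (∃ w, e2 w = v))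
    (h4 : ∀ w1 w2, e1 w1 = e2 w2 → p ∣ (e1 w1).1 ∧ p ∣ (e1 w1).2)
    (h5 : ∀ v : ℤ × ℤ, p ∣ v.1 → p ∣ v.2 → (∃ w, e1 w = v) ∧ (∃ w, e2 w = v)) :
    rep (qf a b c) (p * n) + repd (qf a b c) p n = rep g1 n + rep g2 n := by
  unfold rep repd
  have hE : Function.Injective (fun v : ℤ × ℤ => (p * v.1, p * v.2)) := by
    rintro ⟨x, y⟩ ⟨x', y'⟩ h
    simpa [hp] using h
  rw [← Set.ncard_image_of_injective {v | g1 v = n} he1,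
    ← Set.ncard_image_of_injective {v | g2 v = n} he2,
    ← Set.ncard_image_of_injective {v | p * qf a b c v = n} hE]
  have hU : {v | qf a b c v = p * n} = e1 '' {v | g1 v = n} ∪ e2 '' {v | g2 v = n} := by
    ext v
    simp only [mem_ofPred_eq, mem_union, mem_image]
    constructor
    · intro hv
      rcases h3 v ⟨n, hv⟩ with ⟨w, rfl⟩ | ⟨w, rfl⟩
      · left; rw [h1] at hv; exact ⟨w, mul_left_cancel₀ hp hv, rfl⟩
      · right; rw [h2] at hv; exact ⟨w, mul_left_cancel₀ hp hv, rfl⟩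
    · rintro (⟨w, hw, rfl⟩ | ⟨w, hw, rfl⟩)
      · rw [h1, hw]
      · rw [h2, hw]
  have hI : (fun v : ℤ × ℤ => (p * v.1, p * v.2)) '' {v | p * qf a b c v = n} =
      e1 '' {v | g1 v = n} ∩ e2 '' {v | g2 v = n} := by
    have hsc : ∀ v : ℤ × ℤ, qf a b c (p * v.1, p * v.2) = p * (p * qf a b c v) := by
      intro v; simp only [qf]; ring
    ext v
    simp only [mem_ofPred_eq, mem_inter_iff, mem_image]
    constructor
    · rintro ⟨w, hw, rfl⟩
      obtain ⟨⟨w1, hw1⟩, ⟨w2, hw2⟩⟩ := h5 (p * w.1, p * w.2) ⟨_, rfl⟩ ⟨_, rfl⟩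
      have := hsc w
      refine ⟨⟨w1, ?_, hw1⟩, ⟨w2, ?_, hw2⟩⟩
      · rw [← hw1, h1, hw] at this; exact mul_left_cancel₀ hp this
      · rw [← hw2, h2, hw] at this; exact mul_left_cancel₀ hp this
    · rintro ⟨⟨w1, hw1, rfl⟩, ⟨w2, hw2, h⟩⟩
      obtain ⟨⟨x, hx⟩, ⟨y, hy⟩⟩ := h4 w1 w2 h.symm
      have hv : (p * x, p * y) = e1 w1 := by rw [← hx, ← hy]
      refine ⟨(x, y), ?_, hv⟩
      have := hsc (x, y)
      simp only at this
      rw [hv, h1, hw1] at this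
      exact (mul_left_cancel₀ hp this).symm
  have hf := hfin (p * n)
  rw [hU] at hf
  rw [hU, hI]
  exact Set.ncard_union_add_ncard_inter _ _ (hf.subset subset_union_left)
    (hf.subset subset_union_right)

lemma splitC {p u g : ℤ} (hp : Prime p) (h3 : ¬ p ∣ 15) (hu : u ^ 2 + u + 4 = p * g) (n : ℤ) :
    rep (qf 1 1 4) (p * n) + repd (qf 1 1 4) p n =
      rep (qf p (2 * u + 1) g) n + rep (qf p (-(2 * u + 1)) g) n := by
  have hp0 := hp.ne_zero
  refine two_map hp0 finC (fun v => (u * v.2 + p * v.1, v.2))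
    (fun v => (-(1 + u) * v.2 + p * v.1, v.2)) ?_ ?_ ?_ ?_ ?_ ?_ ?_
  · rintro ⟨x, y⟩ ⟨x', y'⟩ h
    simp only [Prod.mk.injEq] at h
    obtain ⟨h, rfl⟩ := h
    have : x = x' := mul_left_cancel₀ hp0 (by linarith)
    rw [this]
  · rintro ⟨x, y⟩ ⟨x', y'⟩ h
    simp only [Prod.mk.injEq] at h
    obtain ⟨h, rfl⟩ := h
    have : x = x' := mul_left_cancel₀ hp0 (by linarith)
    rw [this]
  · rintro ⟨x, y⟩; simp only [qf]; linear_combination y ^ 2 * hu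
  · rintro ⟨x, y⟩; simp only [qf]; linear_combination y ^ 2 * hu
  · rintro ⟨x, y⟩ ⟨k, hk⟩
    simp only [qf] at hk
    have : p ∣ (x - u * y) * (x + (1 + u) * y) :=
      ⟨k - g * y ^ 2, by linear_combination hk - y ^ 2 * hu⟩
    rcases hp.dvd_or_dvd this with ⟨z, hz⟩ | ⟨z, hz⟩
    · left; exact ⟨(z, y), by simp only [Prod.mk.injEq, and_true]; linarith⟩
    · right; exact ⟨(z, y), by simp only [Prod.mk.injEq, and_true]; linarith⟩
  · rintro ⟨x, y⟩ ⟨x', y'⟩ h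
    simp only [Prod.mk.injEq] at h ⊢
    obtain ⟨h, rfl⟩ := h
    have h1 : p ∣ (2 * u + 1) * y := ⟨x' - x, by linear_combination h⟩
    rcases hp.dvd_or_dvd h1 with ⟨k, hk⟩ | h1
    · exact absurd ⟨4 * g - p * k ^ 2, by linear_combination 4 * hu - (2 * u + 1 + p * k) * hk⟩ h3
    · exact ⟨dvd_add (h1.mul_left _) (dvd_mul_right _ _), h1⟩
  · rintro ⟨_, _⟩ ⟨x, rfl⟩ ⟨y, rfl⟩
    exact ⟨⟨(x - u * y, p * y), by simp only [Prod.mk.injEq, and_true]; ring⟩,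
      ⟨(x + (1 + u) * y, p * y), by simp only [Prod.mk.injEq, and_true]; ring⟩⟩

lemma splitD {p q w g : ℤ} (hp : Prime p) (h3 : ¬ p ∣ 15) (hq : p = 2 * q + 1)
    (hu : 2 * w ^ 2 + w + 2 = p * g) (n : ℤ) :
    rep (qf 2 1 2) (p * n) + repd (qf 2 1 2) p n =
      rep (qf (2 * p) (4 * w + 1) g) n + rep (qf (2 * p) (4 * (q - w) + 1) (g + q - 2 * w)) n := by
  have hp0 := hp.ne_zero
  have hu2 : 2 * (q - w) ^ 2 + (q - w) + 2 = p * (g + q - 2 * w) := by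
    linear_combination hu - (q - 2 * w) * hq
  refine two_map hp0 finD (fun v => (w * v.2 + p * v.1, v.2))
    (fun v => ((q - w) * v.2 + p * v.1, v.2)) ?_ ?_ ?_ ?_ ?_ ?_ ?_
  · rintro ⟨x, y⟩ ⟨x', y'⟩ h
    simp only [Prod.mk.injEq] at h
    obtain ⟨h, rfl⟩ := h
    have : x = x' := mul_left_cancel₀ hp0 (by linarith)
    rw [this]
  · rintro ⟨x, y⟩ ⟨x', y'⟩ h
    simp only [Prod.mk.injEq] at h
    obtain ⟨h, rfl⟩ := h
    have : x = x' := mul_left_cancel₀ hp0 (by linarith)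
    rw [this]
  · rintro ⟨x, y⟩; simp only [qf]; linear_combination y ^ 2 * hu
  · rintro ⟨x, y⟩; simp only [qf]; linear_combination y ^ 2 * hu2
  · rintro ⟨x, y⟩ ⟨k, hk⟩
    simp only [qf] at hk
    have : p ∣ (x - w * y) * (2 * (x - (q - w) * y)) :=
      ⟨k - x * y + w * y ^ 2 - g * y ^ 2, by
        linear_combination hk - y ^ 2 * hu + (x * y - w * y ^ 2) * hq⟩
    rcases hp.dvd_or_dvd this with ⟨z, hz⟩ | h
    · left; exact ⟨(z, y), by simp only [Prod.mk.injEq, and_true]; linarith⟩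
    · rcases hp.dvd_or_dvd h with ⟨k, hk⟩ | ⟨z, hz⟩
      · exfalso
        exact hp.not_isUnit (isUnit_of_dvd_one ⟨1 - k * q, by linear_combination -hq - q * hk⟩)
      · right; exact ⟨(z, y), by simp only [Prod.mk.injEq, and_true]; linarith⟩
  · rintro ⟨x, y⟩ ⟨x', y'⟩ h
    simp only [Prod.mk.injEq] at h ⊢
    obtain ⟨h, rfl⟩ := h
    have h1 : p ∣ (4 * w + 1) * y := ⟨y + 2 * (x' - x), by linear_combination 2 * h - y * hq⟩
    rcases hp.dvd_or_dvd h1 with ⟨k, hk⟩ | h1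
    · exact absurd ⟨8 * g - p * k ^ 2, by linear_combination 8 * hu - (4 * w + 1 + p * k) * hk⟩ h3
    · exact ⟨dvd_add (h1.mul_left _) (dvd_mul_right _ _), h1⟩
  · rintro ⟨_, _⟩ ⟨x, rfl⟩ ⟨y, rfl⟩
    exact ⟨⟨(x - w * y, p * y), by simp only [Prod.mk.injEq, and_true]; ring⟩,
      ⟨(x - (q - w) * y, p * y), by simp only [Prod.mk.injEq, and_true]; ring⟩⟩

lemma splitD2 (n : ℤ) :
    rep (qf 2 1 2) (2 * n) + repd (qf 2 1 2) 2 n = rep (qf 4 1 1) n + rep (qf 1 1 4) n := by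
  refine two_map two_ne_zero finD (fun v => (2 * v.1, v.2)) (fun v => (v.1, 2 * v.2))
    ?_ ?_ ?_ ?_ ?_ ?_ ?_
  · rintro ⟨x, y⟩ ⟨x', y'⟩ h
    simpa using h
  · rintro ⟨x, y⟩ ⟨x', y'⟩ h
    simpa using h
  · rintro ⟨x, y⟩; simp only [qf]; ring
  · rintro ⟨x, y⟩; simp only [qf]; ring
  · rintro ⟨x, y⟩ ⟨k, hk⟩
    simp only [qf] at hk
    have : (2 : ℤ) ∣ x * y := ⟨k - x ^ 2 - y ^ 2, by linear_combination hk⟩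
    rcases Int.prime_two.dvd_or_dvd this with ⟨z, hz⟩ | ⟨z, hz⟩
    · left; exact ⟨(z, y), by simp [hz]⟩
    · right; exact ⟨(x, z), by simp [hz]⟩
  · rintro ⟨x, y⟩ ⟨x', y'⟩ h
    simp only [Prod.mk.injEq] at h ⊢
    exact ⟨⟨x, rfl⟩, ⟨y', h.2⟩⟩
  · rintro ⟨_, _⟩ ⟨x, rfl⟩ ⟨y, rfl⟩
    exact ⟨⟨(x, 2 * y), rfl⟩, ⟨(2 * x, y), rfl⟩⟩

noncomputable def RR (n : ℤ) : ℤ := rep (qf 1 1 4) n + rep (qf 2 1 2) n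
noncomputable def RRd (p n : ℤ) : ℤ := repd (qf 1 1 4) p n + repd (qf 2 1 2) p n

lemma RR_two (n : ℤ) : RR (2 * n) + RRd 2 n = 2 * RR n := by
  have h1 := splitC (p := 2) (u := 0) (g := 2) Int.prime_two (by decide) (by norm_num) n
  have h2 := splitD2 n
  rw [classD (a := 2) (b := 2 * 0 + 1) (c := 2) (by norm_num) (by norm_num) (by norm_num),
    classD (a := 2) (b := -(2 * 0 + 1)) (c := 2) (by norm_num) (by norm_num) (by norm_num)] at h1
  rw [classC (a := 4) (b := 1) (c := 1) (by norm_num) (by norm_num) (by norm_num)] at h2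
  unfold RR RRd
  omega

lemma RR_split {p : ℤ} (hp0 : 0 < p) (hp : Prime p) (h15 : ¬ p ∣ 15) (h3 : p % 3 ≠ 0) {q w g : ℤ}
    (hq : p = 2 * q + 1)
    (hw : 2 * w ^ 2 + w + 2 = p * g) (n : ℤ) : RR (p * n) + RRd p n = 2 * RR n := by
  have h1 := splitC (u := 2 * w) (g := 2 * g) hp h15 (by linear_combination 2 * hw) n
  have h2 := splitD hp h15 hq hw n
  have d1 : (2 * (2 * w) + 1) ^ 2 - 4 * p * (2 * g) = -15 := by linear_combination 8 * hw
  have d2 : (-(2 * (2 * w) + 1)) ^ 2 - 4 * p * (2 * g) = -15 := by linear_combination 8 * hw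
  have d3 : (4 * w + 1) ^ 2 - 4 * (2 * p) * g = -15 := by linear_combination 8 * hw
  have d4 : (4 * (q - w) + 1) ^ 2 - 4 * (2 * p) * (g + q - 2 * w) = -15 := by
    linear_combination 8 * hw - 8 * (q - 2 * w) * hq
  have : p % 3 = 1 ∨ p % 3 = 2 := by omega
  rcases this with h | h
  · rw [classC hp0 h d1, classC hp0 h d2] at h1
    rw [classD (by omega) (by omega) d3, classD (by omega) (by omega) d4] at h2
    unfold RR RRd
    omega
  · rw [classD hp0 h d1, classD hp0 h d2] at h1
    rw [classC (by omega) (by omega) d3, classC (by omega) (by omega) d4] at h2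
    unfold RR RRd
    omega

lemma inert_aux {a b c p : ℤ} (hp0 : p ≠ 0) (h : ∀ v, p ∣ qf a b c v → p ∣ v.1 ∧ p ∣ v.2) (n : ℤ) :
    rep (qf a b c) (p * n) = repd (qf a b c) p n := by
  have : repd (qf a b c) p n = rep (fun v => p * qf a b c v) n := rfl
  rw [this]
  refine one_map' hp0 (fun v => (p * v.1, p * v.2)) ?_ ?_ ?_
  · rintro ⟨x, y⟩ ⟨x', y'⟩ h
    simpa [hp0] using h
  · intro v; simp only [qf]; ring
  · rintro ⟨x, y⟩ hv
    obtain ⟨⟨x', rfl⟩, ⟨y', rfl⟩⟩ := h _ hv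
    exact ⟨(x', y'), rfl⟩

lemma RR_inert {p : ℤ} (hp : Prime p) (h2 : ¬ p ∣ 2)
    (h : ∀ x y : ℤ, p ∣ x ^ 2 + 15 * y ^ 2 → p ∣ x ∧ p ∣ y) (n : ℤ) :
    RR (p * n) = RRd p n := by
  unfold RR RRd
  rw [inert_aux hp.ne_zero, inert_aux hp.ne_zero]
  · rintro ⟨x, y⟩ ⟨k, hk⟩
    simp only [qf] at hk ⊢
    obtain ⟨h1, h3⟩ := h (4 * x + y) y ⟨8 * k, by linear_combination 8 * hk⟩
    have h4 : p ∣ 2 * (2 * x) := by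
      rw [show 2 * (2 * x) = (4 * x + y) - y by ring]
      exact dvd_sub h1 h3
    exact ⟨(hp.dvd_or_dvd ((hp.dvd_or_dvd h4).resolve_left h2)).resolve_left h2, h3⟩
  · rintro ⟨x, y⟩ ⟨k, hk⟩
    simp only [qf] at hk ⊢
    obtain ⟨h1, h3⟩ := h (2 * x + y) y ⟨4 * k, by linear_combination 4 * hk⟩
    have h4 : p ∣ 2 * x := by
      rw [show 2 * x = (2 * x + y) - y by ring]
      exact dvd_sub h1 h3
    exact ⟨(hp.dvd_or_dvd h4).resolve_left h2, h3⟩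

lemma ram_aux {a b c a' b' c' p k : ℤ} (hp : Prime p)
    (h1 : ∀ z y, qf a b c (k * y + p * z, y) = p * qf a' b' c' (y, z))
    (h2 : ∀ x y, p ∣ qf a b c (x, y) → p ∣ (x - k * y) ^ 2) (n : ℤ) :
    rep (qf a b c) (p * n) = rep (qf a' b' c') n := by
  refine one_map' hp.ne_zero (fun v => (k * v.1 + p * v.2, v.1)) ?_ (fun v => h1 _ _) ?_
  · rintro ⟨x, y⟩ ⟨x', y'⟩ h
    simp only [Prod.mk.injEq] at h
    obtain ⟨h, rfl⟩ := h
    have : y = y' := mul_left_cancel₀ hp.ne_zero (by linarith)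
    rw [this]
  · rintro ⟨x, y⟩ hv
    obtain ⟨z, hz⟩ := hp.dvd_of_dvd_pow (h2 _ _ hv)
    exact ⟨(y, z), by simp only [Prod.mk.injEq, and_true]; linarith⟩

lemma RR_three (n : ℤ) : RR (3 * n) = RR n := by
  unfold RR
  rw [ram_aux (a' := 2) (b' := 3) (c' := 3) (k := 1) Int.prime_three,
    ram_aux (a := 2) (a' := 1) (b' := -3) (c' := 6) (k := -1) Int.prime_three,
    classD (a := 2) (b := 3) (c := 3) (by norm_num) (by norm_num) (by norm_num),
    classC (a := 1) (b := -3) (c := 6) (by norm_num) (by norm_num) (by norm_num), add_comm]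
  · intro z y; simp only [qf]; ring
  · rintro x y ⟨k, hk⟩
    simp only [qf] at hk
    exact ⟨2 * k - x ^ 2 - y ^ 2, by linear_combination 2 * hk⟩
  · intro z y; simp only [qf]; ring
  · rintro x y ⟨k, hk⟩
    simp only [qf] at hk
    exact ⟨k - x * y - y ^ 2, by linear_combination hk⟩

lemma RR_five (n : ℤ) : RR (5 * n) = RR n := by
  have h5 : Prime (5 : ℤ) := Nat.prime_iff_prime_int.mp (by norm_num)
  unfold RR
  rw [ram_aux (a' := 2) (b' := 5) (c' := 5) (k := 2) h5,
    ram_aux (a := 2) (a' := 1) (b' := 5) (c' := 10) (k := 1) h5,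
    classD (a := 2) (b := 5) (c := 5) (by norm_num) (by norm_num) (by norm_num),
    classC (a := 1) (b := 5) (c := 10) (by norm_num) (by norm_num) (by norm_num), add_comm]
  · intro z y; simp only [qf]; ring
  · rintro x y ⟨k, hk⟩
    simp only [qf] at hk
    exact ⟨3 * k - x ^ 2 - y ^ 2 - x * y, by linear_combination 3 * hk⟩
  · intro z y; simp only [qf]; ring
  · rintro x y ⟨k, hk⟩
    simp only [qf] at hk
    exact ⟨k - x * y, by linear_combination hk⟩

open NumberTheorySymbols in
lemma chi_jacobi {p : ℕ} (hodd : Odd p) : J(-15 | p) = chiNeg15 p := by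
  rw [jacobiSym.mod_right _ hodd]
  have h1 : chiNeg15 p = chiNeg15 (p % 60) := by
    unfold chiNeg15 chiNeg3 chi5
    rw [Nat.mod_mod_of_dvd p (by norm_num : 3 ∣ 60), Nat.mod_mod_of_dvd p (by norm_num : 5 ∣ 60)]
  rw [h1]
  have h2 : (p % 60) % 2 = 1 := by obtain ⟨k, hk⟩ := hodd; omega
  have h3 : p % 60 < 60 := Nat.mod_lt _ (by norm_num)
  rw [show 4 * (-15 : ℤ).natAbs = 60 from rfl]
  generalize p % 60 = r at *
  interval_cases r <;> first | omega | (norm_num [chiNeg15, chiNeg3, chi5])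

lemma RR_prime {p : ℕ} (hp : p.Prime) (n : ℤ) :
    RR (p * n) + chiNeg15 p * RRd p n = (1 + chiNeg15 p) * RR n := by
  by_cases hp2 : p = 2
  · subst hp2
    have : chiNeg15 2 = 1 := by decide
    rw [this]
    have := RR_two n
    push_cast
    linarith
  by_cases hp3 : p = 3
  · subst hp3
    have : chiNeg15 3 = 0 := by decide
    rw [this]
    have := RR_three n
    push_cast
    linarith
  by_cases hp5 : p = 5
  · subst hp5
    have : chiNeg15 5 = 0 := by decide
    rw [this]
    have := RR_five n
    push_cast
    linarith
  have hodd : Odd p := hp.odd_of_ne_two hp2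
  have hpp : Prime (p : ℤ) := Nat.prime_iff_prime_int.mp hp
  have : Fact p.Prime := ⟨hp⟩
  have hn3 : ¬ (p : ℤ) ∣ 3 := by
    intro h
    exact hp3 ((Nat.prime_dvd_prime_iff_eq hp Nat.prime_three).mp (by exact_mod_cast h))
  have hn5 : ¬ (p : ℤ) ∣ 5 := by
    intro h
    exact hp5 ((Nat.prime_dvd_prime_iff_eq hp Nat.prime_five).mp (by exact_mod_cast h))
  have hn2 : ¬ (p : ℤ) ∣ 2 := by
    intro h
    exact hp2 ((Nat.prime_dvd_prime_iff_eq hp Nat.prime_two).mp (by exact_mod_cast h))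
  have hn15 : ¬ (p : ℤ) ∣ 15 := by
    intro h
    rcases hpp.dvd_or_dvd (show (p : ℤ) ∣ 3 * 5 by norm_num; exact h) with h | h
    · exact hn3 h
    · exact hn5 h
  have hne : ((-15 : ℤ) : ZMod p) ≠ 0 := by
    rw [Ne, ZMod.intCast_zmod_eq_zero_iff_dvd, dvd_neg]
    exact hn15
  have hleg : legendreSym p (-15) = chiNeg15 p := by
    rw [jacobiSym.legendreSym.to_jacobiSym, chi_jacobi hodd]
  rcases legendreSym.eq_one_or_neg_one p hne with h | h
  · have hsq := (legendreSym.eq_one_iff p hne).mp h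
    rw [← hleg, h]
    obtain ⟨t0, ht0⟩ := hsq
    obtain ⟨t, rfl⟩ := ZMod.intCast_surjective t0
    have ht : (p : ℤ) ∣ t ^ 2 + 15 := by
      rw [← ZMod.intCast_zmod_eq_zero_iff_dvd]
      push_cast at ht0 ⊢
      rw [pow_two, ← ht0]; ring
    obtain ⟨q, hq⟩ := hodd
    -- choose w with 4 w + 1 ≡ t
    have hcop : ∃ w : ℤ, (p : ℤ) ∣ 4 * w + 1 - t := by
      refine ⟨(t - 1) * q ^ 2, ?_⟩
      refine ⟨(t - 1) * (2 * q - 1), ?_⟩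
      rw [hq]; push_cast; ring
    obtain ⟨w, hw⟩ := hcop
    have h8 : (p : ℤ) ∣ 2 * (2 * (2 * (2 * w ^ 2 + w + 2))) := by
      have := dvd_add ht (hw.mul_right (4 * w + 1 + t))
      rw [show 2 * (2 * (2 * (2 * w ^ 2 + w + 2))) =
        t ^ 2 + 15 + (4 * w + 1 - t) * (4 * w + 1 + t) by ring]
      exact this
    have h8 := (hpp.dvd_or_dvd h8).resolve_left hn2
    have h8 := (hpp.dvd_or_dvd h8).resolve_left hn2
    obtain ⟨g, hg⟩ := (hpp.dvd_or_dvd h8).resolve_left hn2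
    have := RR_split (by exact_mod_cast hp.pos) hpp hn15 (by
      intro h
      have h' : 3 ∣ p := by omega
      exact hp3 ((Nat.prime_dvd_prime_iff_eq Nat.prime_three hp).mp h').symm)
      (q := q) (by exact_mod_cast hq) hg n
    linarith
  · have hsq := (legendreSym.eq_neg_one_iff p).mp h
    rw [← hleg, h]
    have := RR_inert hpp hn2 (by
      intro x y hxy
      have hy : (p : ℤ) ∣ y := by
        by_contra hy
        apply hsq
        have hy' : (y : ZMod p) ≠ 0 := by
          rwa [Ne, ZMod.intCast_zmod_eq_zero_iff_dvd]
        rw [← ZMod.intCast_zmod_eq_zero_iff_dvd] at hxy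
        push_cast at hxy ⊢
        refine ⟨x / y, ?_⟩
        field_simp
        linear_combination -hxy
      refine ⟨?_, hy⟩
      have := dvd_sub hxy ((hy.mul_right (15 * y)))
      refine hpp.dvd_of_dvd_pow (n := 2) ?_
      convert this using 2; ring) n
    linarith

lemma RRd_mul {p : ℤ} (hp : p ≠ 0) (n : ℤ) : RRd p (p * n) = RR n := by
  unfold RRd RR repd rep
  simp only [mul_right_inj' hp]

lemma RRd_not {p n : ℤ} (h : ¬ p ∣ n) : RRd p n = 0 := by
  have : ∀ f, repd f p n = 0 := by
    intro f
    unfold repd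
    have : {v | p * f v = n} = ∅ := by
      ext v
      simp only [mem_ofPred_eq, mem_empty_iff_false, iff_false]
      intro hv
      exact h ⟨_, hv.symm⟩
    rw [this, Set.ncard_empty]
  simp [RRd, this]

lemma RR_one : RR 1 = 2 := by
  have hC : rep (qf 1 1 4) 1 = 2 := by
    unfold rep
    have : {v | qf 1 1 4 v = 1} = {((1 : ℤ), (0 : ℤ)), (-1, 0)} := by
      ext ⟨x, y⟩
      simp only [mem_ofPred_eq, mem_insert_iff, mem_singleton_iff, Prod.mk.injEq, qf]
      constructor
      · intro h
        have hy : y = 0 := by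
          have h1 : y < 1 := by nlinarith [sq_nonneg (2 * x + y)]
          have h2 : -1 < y := by nlinarith [sq_nonneg (2 * x + y)]
          omega
        subst hy
        have h1 : (x - 1) * (x + 1) = 0 := by linear_combination h
        rcases mul_eq_zero.mp h1 with h | h
        · left; omega
        · right; omega
      · rintro (⟨rfl, rfl⟩ | ⟨rfl, rfl⟩) <;> norm_num
    rw [this, Set.ncard_pair (by norm_num)]
  have hD : rep (qf 2 1 2) 1 = 0 := by
    unfold rep
    have : {v | qf 2 1 2 v = 1} = ∅ := by
      ext ⟨x, y⟩
      simp only [mem_ofPred_eq, mem_empty_iff_false, iff_false, qf]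
      intro h
      have hy : y = 0 := by
        have h1 : y < 1 := by nlinarith [sq_nonneg (4 * x + y)]
        have h2 : -1 < y := by nlinarith [sq_nonneg (4 * x + y)]
        omega
      subst hy
      omega
    rw [this, Set.ncard_empty]
  simp [RR, hC, hD]

lemma RR_prime_pow {p : ℕ} (hp : p.Prime) {m : ℕ} (hm : ¬ p ∣ m) (k : ℕ) :
    RR ((p ^ k * m : ℕ) : ℤ) = (∑ i ∈ Finset.range (k + 1), chiNeg15 p ^ i) * RR m := by
  have hp0 : (p : ℤ) ≠ 0 := by exact_mod_cast hp.ne_zero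
  induction k using Nat.twoStepInduction with
  | zero => simp
  | one =>
    have := RR_prime hp m
    rw [RRd_not (by exact_mod_cast hm)] at this
    simp only [Finset.sum_range_succ, Finset.sum_range_zero]
    push_cast
    rw [pow_one]
    linarith
  | more k h0 h1 =>
    have := RR_prime hp ((p ^ (k + 1) * m : ℕ) : ℤ)
    have e1 : ((p ^ (k + 1) * m : ℕ) : ℤ) = p * ((p ^ k * m : ℕ) : ℤ) := by push_cast; ring
    have e2 : ((p ^ (k + 2) * m : ℕ) : ℤ) = p * ((p ^ (k + 1) * m : ℕ) : ℤ) := by push_cast; ring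
    have e3 : RRd p ((p ^ (k + 1) * m : ℕ) : ℤ) = RR ((p ^ k * m : ℕ) : ℤ) := by
      rw [e1, RRd_mul hp0]
    rw [e2]
    rw [e3] at this
    rw [h0, h1] at this
    rw [Finset.sum_range_succ _ (k + 2), Finset.sum_range_succ _ (k + 1)]
    rw [Finset.sum_range_succ _ (k + 1)] at this
    linear_combination this

lemma chi_mul (a b : ℕ) : chiNeg15 (a * b) = chiNeg15 a * chiNeg15 b := by
  have h1 : ∀ n, chiNeg15 n = chiNeg15 (n % 15) := by
    intro n
    unfold chiNeg15 chiNeg3 chi5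
    rw [Nat.mod_mod_of_dvd n (by norm_num : 3 ∣ 15), Nat.mod_mod_of_dvd n (by norm_num : 5 ∣ 15)]
  have h2 : ∀ x : Fin 15, ∀ y : Fin 15,
      chiNeg15 ((x.1 * y.1) % 15) = chiNeg15 x.1 * chiNeg15 y.1 := by decide
  rw [h1 (a * b), h1 a, h1 b, Nat.mul_mod]
  exact h2 ⟨a % 15, Nat.mod_lt _ (by norm_num)⟩ ⟨b % 15, Nat.mod_lt _ (by norm_num)⟩

lemma chi_pow (a k : ℕ) : chiNeg15 (a ^ k) = chiNeg15 a ^ k := by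
  induction k with
  | zero => rw [pow_zero, pow_zero]; decide
  | succ k ih => rw [pow_succ, pow_succ, chi_mul, ih]

lemma chi_bound (n : ℕ) : ‖((chiNeg15 n : ℤ) : ℂ)‖ ≤ 1 := by
  unfold chiNeg15 chiNeg3 chi5
  split_ifs <;> simp

open ArithmeticFunction in
noncomputable def chiAF : ArithmeticFunction ℂ := ⟨fun n => ((chiNeg15 n : ℤ) : ℂ), by
  simp [chiNeg15, chiNeg3]⟩

open ArithmeticFunction ArithmeticFunction.zeta in
noncomputable def cAF : ArithmeticFunction ℂ := (ζ : ArithmeticFunction ℂ) * chiAF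

lemma chiAF_apply (n : ℕ) : chiAF n = ((chiNeg15 n : ℤ) : ℂ) := rfl

lemma cAF_mult : cAF.IsMultiplicative := by
  refine (ArithmeticFunction.isMultiplicative_zeta.natCast).mul ?_
  refine ⟨by rw [chiAF_apply]; have : chiNeg15 1 = 1 := by decide
             rw [this]; simp, fun _ => ?_⟩
  simp only [chiAF_apply, chi_mul]
  push_cast
  rfl

lemma cAF_pow {p : ℕ} (hp : p.Prime) (k : ℕ) :
    cAF (p ^ k) = ∑ i ∈ Finset.range (k + 1), (chiNeg15 p : ℂ) ^ i := by
  rw [cAF, ArithmeticFunction.coe_zeta_mul_apply, Nat.sum_divisors_prime_pow hp]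
  simp only [chiAF_apply, chi_pow]
  push_cast
  rfl

lemma RR_eq (n : ℕ) (hn : n ≠ 0) : ((RR n : ℤ) : ℂ) = 2 * cAF n := by
  induction n using Nat.strong_induction_on with
  | _ n ih =>
    by_cases h1 : n = 1
    · subst h1
      rw [cAF_mult.map_one]
      have := RR_one
      push_cast
      rw [this]; simp
    · obtain ⟨p, hp, hpn⟩ := Nat.exists_prime_and_dvd h1
      obtain ⟨k, m, hm, rfl⟩ := Nat.exists_eq_pow_mul_and_not_dvd hn p hp.ne_one
      have hm0 : m ≠ 0 := by rintro rfl; simp at hn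
      have hk : k ≠ 0 := by
        rintro rfl
        simp at hpn
        exact hm hpn
      have hlt : m < p ^ k * m := by
        have : 1 < p ^ k := Nat.one_lt_pow hk hp.one_lt
        nlinarith [Nat.pos_of_ne_zero hm0]
      have hcop : Nat.Coprime (p ^ k) m := Nat.Coprime.pow_left _ ((Nat.Prime.coprime_iff_not_dvd hp).mpr hm)
      rw [RR_prime_pow hp hm, cAF_mult.map_mul_of_coprime hcop, cAF_pow hp]
      have := ih m hlt hm0
      push_cast
      rw [this]
      ring

noncomputable def AB (n : ℤ) : ℤ := rep (qf 1 0 15) n + rep (qf 3 0 5) n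

lemma A_par {x y : ℤ} (h : 2 ∣ x ^ 2 + 15 * y ^ 2) : 2 ∣ x - y := by
  rcases Int.even_or_odd' x with ⟨a, rfl | rfl⟩ <;> rcases Int.even_or_odd' y with ⟨b, rfl | rfl⟩ <;>
    ring_nf at h <;> omega

lemma B_par {x y : ℤ} (h : 2 ∣ 3 * x ^ 2 + 5 * y ^ 2) : 2 ∣ x - y := by
  rcases Int.even_or_odd' x with ⟨a, rfl | rfl⟩ <;> rcases Int.even_or_odd' y with ⟨b, rfl | rfl⟩ <;>
    ring_nf at h <;> omega

lemma A_four (n : ℤ) : rep (qf 1 0 15) (4 * n) = rep (qf 1 1 4) n := by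
  refine one_map (fun v => (2 * v.1 + v.2, v.2)) ?_ ?_ ?_
  · rintro ⟨x, y⟩ ⟨x', y'⟩ h
    simp only [Prod.mk.injEq] at h ⊢
    omega
  · rintro ⟨x, y⟩ h
    simp only [qf] at h ⊢
    linear_combination 4 * h
  · rintro ⟨x, y⟩ h
    simp only [qf] at h ⊢
    obtain ⟨z, hz⟩ := A_par (x := x) (y := y) ⟨2 * n, by linear_combination h⟩
    obtain rfl : x = y + 2 * z := by omega
    exact ⟨(z, y), by simp only; linarith, by simp only [Prod.mk.injEq, and_true]; ring⟩

lemma B_four (n : ℤ) : rep (qf 3 0 5) (4 * n) = rep (qf 2 1 2) n := by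
  refine one_map (fun v => (v.1 - v.2, v.1 + v.2)) ?_ ?_ ?_
  · rintro ⟨x, y⟩ ⟨x', y'⟩ h
    simp only [Prod.mk.injEq] at h ⊢
    omega
  · rintro ⟨x, y⟩ h
    simp only [qf] at h ⊢
    linear_combination 4 * h
  · rintro ⟨x, y⟩ h
    simp only [qf] at h ⊢
    obtain ⟨z, hz⟩ := B_par (x := x) (y := y) ⟨2 * n, by linear_combination h⟩
    obtain rfl : x = y + 2 * z := by omega
    exact ⟨(y + z, -z), by simp only; linarith,
      by simp only [Prod.mk.injEq]; constructor <;> ring⟩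

lemma AB_four (n : ℤ) : AB (4 * n) = RR n := by
  rw [AB, RR, A_four, B_four]

lemma AB_odd {n : ℤ} (hn : n % 2 = 1) : AB n = RR n := by
  rw [AB, RR]
  have h1 : rep (qf 1 1 4) n = rep (qf 1 0 15) n := by
    refine one_map (fun v => (v.1 - v.2, 2 * v.2)) ?_ ?_ ?_
    · rintro ⟨x, y⟩ ⟨x', y'⟩ h
      simp only [Prod.mk.injEq] at h ⊢
      omega
    · rintro ⟨x, y⟩ h
      simp only [qf] at h ⊢
      linear_combination h
    · rintro ⟨x, y⟩ h
      simp only [qf] at h ⊢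
      have : 2 ∣ y := by
        rcases Int.even_or_odd' x with ⟨a, rfl | rfl⟩ <;>
          rcases Int.even_or_odd' y with ⟨b, rfl | rfl⟩ <;> ring_nf at h <;> omega
      obtain ⟨z, rfl⟩ := this
      exact ⟨(x + z, z), by simp only; linarith, by simp⟩
  have h2 : rep (qf 2 1 2) n = rep (qf 3 0 5) n := by
    refine one_map (fun v => (v.2 + v.1, v.2 - v.1)) ?_ ?_ ?_
    · rintro ⟨x, y⟩ ⟨x', y'⟩ h
      simp only [Prod.mk.injEq] at h ⊢
      omega
    · rintro ⟨x, y⟩ h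
      simp only [qf] at h ⊢
      linear_combination h
    · rintro ⟨x, y⟩ h
      simp only [qf] at h ⊢
      have : 2 ∣ x - y := by
        rcases Int.even_or_odd' x with ⟨a, rfl | rfl⟩ <;>
          rcases Int.even_or_odd' y with ⟨b, rfl | rfl⟩ <;> ring_nf at h <;> omega
      obtain ⟨z, hz⟩ := this
      obtain rfl : x = y + 2 * z := by omega
      exact ⟨(z, y + z), by simp only; linarith, by simp only [Prod.mk.injEq]; constructor <;> ring⟩
  rw [h1, h2]

lemma AB_two {n : ℤ} (hn : n % 4 = 2) : AB n = 0 := by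
  have hA : {v | qf 1 0 15 v = n} = ∅ := by
    ext ⟨x, y⟩
    simp only [mem_ofPred_eq, mem_empty_iff_false, iff_false, qf]
    intro h
    obtain ⟨z, hz⟩ := A_par (x := x) (y := y) ⟨n / 2, by rw [← Int.mul_ediv_assoc _ (by omega)]; simp; linarith⟩
    obtain rfl : x = y + 2 * z := by omega
    ring_nf at h
    omega
  have hB : {v | qf 3 0 5 v = n} = ∅ := by
    ext ⟨x, y⟩
    simp only [mem_ofPred_eq, mem_empty_iff_false, iff_false, qf]
    intro h
    obtain ⟨z, hz⟩ := B_par (x := x) (y := y) ⟨n / 2, by rw [← Int.mul_ediv_assoc _ (by omega)]; simp; linarith⟩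
    obtain rfl : x = y + 2 * z := by omega
    ring_nf at h
    omega
  simp [AB, rep, hA, hB]

/-- dilated coefficients -/
noncomputable def dil (d : ℕ) (f : ℕ → ℂ) (n : ℕ) : ℂ := if d ∣ n then f (n / d) else 0

lemma AB_eq (n : ℕ) (hn : n ≠ 0) :
    ((AB n : ℤ) : ℂ) = 2 * (cAF n - 2 * dil 2 cAF n + 2 * dil 4 cAF n) := by
  have h4 : n % 2 = 1 ∨ n % 4 = 2 ∨ n % 4 = 0 := by omega
  rcases h4 with h | h | h
  · rw [AB_odd (by omega), RR_eq n hn, dil, dil, if_neg (by omega), if_neg (by omega)]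
    ring
  · rw [AB_two (by omega)]
    obtain ⟨m, rfl⟩ : 2 ∣ n := by omega
    rw [dil, dil, if_pos (by omega), if_neg (by omega), Nat.mul_div_cancel_left _ (by norm_num)]
    have h2 := RR_two m
    rw [RRd_not (by omega)] at h2
    have h3 := RR_eq (2 * m) hn
    have h5 := RR_eq m (by omega)
    push_cast at h3
    have h6 : ((RR (2 * m) : ℤ) : ℂ) = 2 * (RR m : ℤ) := by
      rw [show RR (2 * m) = 2 * RR m by linarith]; push_cast; rfl
    push_cast
    linear_combination h3 - h6 - 2 * h5
  · obtain ⟨m, rfl⟩ : 4 ∣ n := by omega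
    rw [dil, dil, if_pos (by omega), if_pos (by omega), Nat.mul_div_cancel_left _ (by norm_num),
      show 4 * m / 2 = 2 * m by omega]
    push_cast
    rw [AB_four]
    have h2 := RR_two (2 * m)
    rw [RRd_mul (by norm_num)] at h2
    have h3 := RR_eq (4 * m) hn
    have h5 := RR_eq m (by omega)
    have h7 := RR_eq (2 * m) (by omega)
    push_cast at h3 h7
    have h6 : ((RR (4 * m) : ℤ) : ℂ) = 2 * (RR (2 * m) : ℤ) - (RR m : ℤ) := by
      rw [show (4 * m : ℤ) = 2 * (2 * m) by ring, show RR (2 * (2 * m)) = 2 * RR (2 * m) - RR m by linarith]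
      push_cast; rfl
    linear_combination h3 - h6 - 2 * h7 + 2 * h5

lemma dil_hasSum {d : ℕ} (hd : d ≠ 0) {f : ℕ → ℂ} {s a : ℂ} (hf : LSeriesHasSum f s a) :
    LSeriesHasSum (dil d f) s ((d : ℂ) ^ (-s) * a) := by
  unfold LSeriesHasSum at *
  have hinj : Function.Injective (fun n : ℕ => d * n) := fun a b h =>
    Nat.eq_of_mul_eq_mul_left (Nat.pos_of_ne_zero hd) h
  rw [← hinj.hasSum_iff]
  · have := hf.mul_left ((d : ℂ) ^ (-s))
    refine Eq.mpr (congrArg (fun h => HasSum h _) (funext fun n => ?_)) this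
    rcases eq_or_ne n 0 with rfl | hn
    · simp
    · simp only [Function.comp_apply]
      rw [LSeries.term_of_ne_zero (mul_ne_zero hd hn), LSeries.term_of_ne_zero hn, dil,
        if_pos (dvd_mul_right _ _), Nat.mul_div_cancel_left _ (Nat.pos_of_ne_zero hd),
        Nat.cast_mul, Complex.natCast_mul_natCast_cpow, Complex.cpow_neg]
      field_simp
  · intro n hn
    have : ¬ d ∣ n := by
      rintro ⟨k, rfl⟩
      exact hn ⟨k, rfl⟩
    simp [LSeries.term, dil, this]

lemma chi_summable {s : ℂ} (hs : 1 < s.re) : LSeriesSummable (fun n => chiAF n) s :=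
  LSeriesSummable_of_bounded_of_one_lt_re (m := 1) (fun n _ => chi_bound n) hs

lemma LSer_eq {s : ℂ} (hs : 1 < s.re) : LSer chiNeg15 s = LSeries (fun n => chiAF n) s := by
  unfold LSeries LSer
  rw [(chi_summable hs).tsum_eq_zero_add, LSeries.term_zero, zero_add]
  refine tsum_congr fun n => ?_
  rw [LSeries.term_of_ne_zero (Nat.succ_ne_zero n), chiAF_apply]
  push_cast
  rfl

lemma c_hasSum {s : ℂ} (hs : 1 < s.re) :
    LSeriesHasSum (fun n => cAF n) s (riemannZeta s * LSer chiNeg15 s) := by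
  rw [LSer_eq hs]
  have h := (ArithmeticFunction.LSeriesHasSum_zeta hs)
  exact ArithmeticFunction.LSeriesHasSum_mul h (chi_summable hs).LSeriesHasSum

lemma AB_hasSum {s : ℂ} (hs : 1 < s.re) :
    LSeriesHasSum (fun n => ((AB n : ℤ) : ℂ)) s
      (2 * (1 + (2 : ℂ) ^ (1 - 2 * s) - (2 : ℂ) ^ (1 - s)) * riemannZeta s * LSer chiNeg15 s) := by
  have h1 := c_hasSum hs
  have h2 := dil_hasSum two_ne_zero h1
  have h4 := dil_hasSum four_ne_zero h1
  have h := ((h1.sub (h2.smul 2)).add (h4.smul 2)).smul 2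
  rw [LSeriesHasSum_congr (g := (2 : ℂ) • ((fun n => cAF n) - (2 : ℂ) • dil 2 (fun n => cAF n) +
    (2 : ℂ) • dil 4 (fun n => cAF n)))]
  · convert h using 1
    have e1 : (2 : ℂ) ^ (1 - s) = 2 * (2 : ℂ) ^ (-s) := by
      rw [sub_eq_add_neg, Complex.cpow_add _ _ two_ne_zero, Complex.cpow_one]
    have e2 : (2 : ℂ) ^ (1 - 2 * s) = 2 * (4 : ℂ) ^ (-s) := by
      rw [sub_eq_add_neg, Complex.cpow_add _ _ two_ne_zero, Complex.cpow_one]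
      congr 1
      have : (4 : ℂ) = ((2 : ℕ) : ℂ) * ((2 : ℕ) : ℂ) := by norm_num
      rw [this, Complex.natCast_mul_natCast_cpow, ← Complex.cpow_add _ _ (by norm_num)]
      push_cast
      congr 1
      ring
    rw [e1, e2]
    push_cast
    ring
  · intro n hn
    rw [AB_eq n hn]
    simp only [Pi.smul_apply, Pi.add_apply, Pi.sub_apply, smul_eq_mul]

lemma lattice_hasSum {f : ℤ × ℤ → ℤ} (hfin : ∀ n, {v | f v = n}.Finite)
    (hpos : ∀ v, v ≠ 0 → 0 < f v) (hzero : f 0 = 0) {s : ℂ}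
    (hsum : LSeriesSummable (fun n => ((rep f n : ℕ) : ℂ)) s) :
    HasSum (fun v : {v : ℤ × ℤ // v ≠ 0} => 1 / ((f v.1 : ℂ) ^ s))
      (LSeries (fun n => ((rep f n : ℕ) : ℂ)) s) := by
  let φ : {v : ℤ × ℤ // v ≠ 0} → ℕ := fun v => (f v.1).toNat
  have hφ : ∀ v, (φ v : ℤ) = f v.1 := fun v => Int.toNat_of_nonneg (hpos v.1 v.2).le
  have hφ' : ∀ v, (φ v : ℂ) = (f v.1 : ℂ) := fun v => by exact_mod_cast congrArg (Int.cast : ℤ → ℂ) (hφ v)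
  let E : ∀ n : ℕ, n ≠ 0 → ({v // φ v = n} ≃ {v | f v = (n : ℤ)}) := fun n hn =>
    { toFun := fun v => ⟨v.1.1, by have := hφ v.1; rw [v.2] at this; exact this.symm⟩
      invFun := fun v => ⟨⟨v.1, by
        intro h
        have h2 : f v.1 = n := v.2
        rw [h, hzero] at h2
        exact hn (by exact_mod_cast h2.symm)⟩, by
          have h2 : f v.1 = n := v.2
          simp [φ, h2]⟩
      left_inv := fun v => rfl
      right_inv := fun v => rfl }
  have hfinite : ∀ n, Finite {v // φ v = n} := by
    intro n
    by_cases hn : n = 0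
    · subst hn
      have : IsEmpty {v // φ v = 0} := ⟨fun v => by
        have h1 := hφ v.1
        have h2 := hpos v.1.1 v.1.2
        rw [v.2] at h1
        push_cast at h1
        omega⟩
      infer_instance
    · have := (hfin n).to_subtype
      exact Finite.of_equiv _ (E n hn).symm
  have hcard : ∀ n, n ≠ 0 → Nat.card {v // φ v = n} = rep f n := by
    intro n hn
    rw [Nat.card_congr (E n hn)]
    rfl
  have hempty : IsEmpty {v // φ v = 0} := ⟨fun v => by
        have h1 := hφ v.1
        have h2 := hpos v.1.1 v.1.2
        rw [v.2] at h1
        push_cast at h1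
        omega⟩
  rw [← (Equiv.sigmaFiberEquiv φ).hasSum_iff]
  have hval : ∀ x : (Σ n, {v // φ v = n}),
      ((fun v : {v : ℤ × ℤ // v ≠ 0} => 1 / ((f v.1 : ℂ) ^ s)) ∘ (Equiv.sigmaFiberEquiv φ)) x =
        1 / ((x.1 : ℂ) ^ s) := by
    rintro ⟨n, v, hv⟩
    simp only [Function.comp_apply, Equiv.sigmaFiberEquiv_apply]
    rw [← hφ', hv]
  rw [funext hval]
  have hfib : ∀ n : ℕ, HasSum (fun _ : {v // φ v = n} => 1 / ((n : ℂ) ^ s))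
      (LSeries.term (fun n => ((rep f n : ℕ) : ℂ)) s n) := by
    intro n
    by_cases hn : n = 0
    · subst hn
      rw [LSeries.term_zero]
      exact hasSum_empty
    · have := hfinite n
      have := Fintype.ofFinite {v // φ v = n}
      rw [LSeries.term_of_ne_zero hn]
      have h := hasSum_fintype (fun _ : {v // φ v = n} => 1 / ((n : ℂ) ^ s))
      convert h using 1
      rw [Finset.sum_const, Finset.card_univ, ← Nat.card_eq_fintype_card, hcard n hn, nsmul_eq_mul,
        mul_one_div]
  have hsummable : Summable (fun x : (Σ n, {v // φ v = n}) => 1 / ((x.1 : ℂ) ^ s)) := by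
    apply Summable.of_norm
    rw [summable_sigma_of_nonneg (fun _ => norm_nonneg _)]
    refine ⟨fun n => ?_, ?_⟩
    · have := hfinite n
      exact Summable.of_finite
    · refine (hsum.norm).congr fun n => ?_
      by_cases hn : n = 0
      · subst hn
        simp
      · change _ = ∑' _ : {v // φ v = n}, ‖1 / ((n : ℂ) ^ s)‖
        rw [LSeries.term_of_ne_zero hn, tsum_const, hcard n hn]
        simp [div_eq_mul_inv]
  have h1 := hsummable.hasSum
  have h2 := h1.sigma hfib
  have h3 : HasSum (LSeries.term (fun n => ((rep f n : ℕ) : ℂ)) s)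
    (LSeries (fun n => ((rep f n : ℕ) : ℂ)) s) := hsum.hasSum
  rw [h3.unique h2]
  exact h1

lemma A_pos (v : ℤ × ℤ) (hv : v ≠ 0) : 0 < qf 1 0 15 v := by
  obtain ⟨x, y⟩ := v
  simp only [qf]
  by_cases hx : x = 0
  · subst hx
    have : y ≠ 0 := by rintro rfl; exact hv rfl
    have := pow_pos (abs_pos.mpr this) 2
    rw [sq_abs] at this
    linarith
  · have := pow_pos (abs_pos.mpr hx) 2
    rw [sq_abs] at this
    nlinarith [sq_nonneg y]

lemma B_pos (v : ℤ × ℤ) (hv : v ≠ 0) : 0 < qf 3 0 5 v := by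
  obtain ⟨x, y⟩ := v
  simp only [qf]
  by_cases hx : x = 0
  · subst hx
    have : y ≠ 0 := by rintro rfl; exact hv rfl
    have := pow_pos (abs_pos.mpr this) 2
    rw [sq_abs] at this
    linarith
  · have := pow_pos (abs_pos.mpr hx) 2
    rw [sq_abs] at this
    nlinarith [sq_nonneg y]

lemma AB_norm (n : ℕ) : ‖((AB n : ℤ) : ℂ)‖ = rep (qf 1 0 15) n + rep (qf 3 0 5) n := by
  have : ((AB n : ℤ) : ℂ) = ((rep (qf 1 0 15) n + rep (qf 3 0 5) n : ℕ) : ℂ) := by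
    rw [AB]; push_cast; rfl
  rw [this, Complex.norm_natCast]
  push_cast
  rfl


/-- Lemma 3.3 (2): for `Re(s) > 1`,
`∑'_{(m,k)≠0} [ (3m²+5k²)^{-s} + (m²+15k²)^{-s} ] = 2(1 + 2^{1−2s} − 2^{1−s}) ζ(s) L(χ₋₁₅, s)`. -/
theorem lattice_sum_eq_two_factor_zeta_L (s : ℂ) (hs : 1 < s.re) :
    (∑' p : {p : ℤ × ℤ // p ≠ 0},
        (1 / ((3 * (p.1.1 : ℂ) ^ 2 + 5 * (p.1.2 : ℂ) ^ 2) ^ s) +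
          1 / (((p.1.1 : ℂ) ^ 2 + 15 * (p.1.2 : ℂ) ^ 2) ^ s))) =
      2 * (1 + (2 : ℂ) ^ (1 - 2 * s) - (2 : ℂ) ^ (1 - s)) * riemannZeta s *
        LSer chiNeg15 s := by
  have hAB := AB_hasSum hs
  have hsA : LSeriesSummable (fun n => ((rep (qf 1 0 15) n : ℕ) : ℂ)) s := by
    refine Summable.of_norm_bounded hAB.LSeriesSummable.norm fun n => LSeries.norm_term_le s ?_
    rw [AB_norm, Complex.norm_natCast]
    exact le_add_of_nonneg_right (Nat.cast_nonneg _)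
  have hsB : LSeriesSummable (fun n => ((rep (qf 3 0 5) n : ℕ) : ℂ)) s := by
    refine Summable.of_norm_bounded hAB.LSeriesSummable.norm fun n => LSeries.norm_term_le s ?_
    rw [AB_norm, Complex.norm_natCast]
    exact le_add_of_nonneg_left (Nat.cast_nonneg _)
  have hA := lattice_hasSum finA A_pos (by simp [qf]) hsA
  have hB := lattice_hasSum finB B_pos (by simp [qf]) hsB
  have h := (hB.add hA).tsum_eq
  have e : (fun p : {p : ℤ × ℤ // p ≠ 0} =>
        (1 / ((3 * (p.1.1 : ℂ) ^ 2 + 5 * (p.1.2 : ℂ) ^ 2) ^ s) +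
          1 / (((p.1.1 : ℂ) ^ 2 + 15 * (p.1.2 : ℂ) ^ 2) ^ s))) =
      fun p : {p : ℤ × ℤ // p ≠ 0} =>
        1 / ((qf 3 0 5 p.1 : ℂ) ^ s) + 1 / ((qf 1 0 15 p.1 : ℂ) ^ s) := by
    funext p
    simp [qf]
  rw [e, h, ← LSeries_add hsB hsA, ← hAB.LSeries_eq]
  refine LSeries_congr (fun {n} _ => ?_) s
  simp only [Pi.add_apply, AB]
  push_cast
  ring
end
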